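/- (Curvature-dependent jump relation for the supported-plate representation, biharmonic part.) Let ν ∈ ℝ with ν ≠ 3 and ν ≠ −1, set α₁ = 2 − ν, α₂ = (ν−1)(7+ν)/(3−ν), α₃ = (1−ν)(3+ν)/(1+ν), and c₀ = (ν−1)(ν+3)(2ν−1)/(2(3−ν)). Let σ : ℝ → ℝ be infinitely differentiable with σ(s+L) = σ(s) for all s, and fix t ∈ ℝ. Define the kernel K(x, γ(s)) = G^B_{n_x n_x n_y n_y n_y} + ν G^B_{τ_x τ_x n_y n_y n_y} + α₁ G^B_{n_x n_x n_y τ_y τ_y} + ν α₁ G^B_{τ_x τ_x n_y τ_y τ_y} + α₂ κ(s) G^B_{n_x n_x n_y n_y} + ν α₂ κ(s) G^B_{τ_x τ_x n_y n_y} + α₃ κ′(s) G^B_{n_x n_x τ_y} + ν α₃ κ′(s) G^B_{τ_x τ_x τ_y}, all evaluated at (x, γ(s)), with x-derivatives in the directions n(t), τ(t) and y-derivatives in the directions n(s), τ(s). Then there is h₀ > 0 such that for 0 < |h| < h₀ the point γ(t) + h·n(t) does not lie on the curve, the function s ↦ K(γ(t), γ(s))·σ(s) is bounded on [0, L] with Lebesgue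 integral I := ∫₀^L K(γ(t), γ(s))σ(s) ds, and lim_{h→0⁺} ∫₀^L K(γ(t)+h·n(t), γ(s))σ(s) ds = c₀·κ(t)²·σ(t) + I, while lim_{h→0⁻} ∫₀^L K(γ(t)+h·n(t), γ(s))σ(s) ds = −c₀·κ(t)²·σ(t) + I. -/

import Mathlib

open Real Filter Topology MeasureTheory

noncomputable section

/-- Euclidean dot product on `ℝ × ℝ`. -/
def dot2 (v w : ℝ × ℝ) : ℝ := v.1 * w.1 + v.2 * w.2

/-- Unit tangent vector `τ(s) = γ′(s)`. -/
def tang (γ : ℝ → ℝ × ℝ) (s : ℝ) : ℝ × ℝ := deriv γ s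

/-- Unit normal vector `n(s) = (τ₂(s), −τ₁(s))`. -/
def nor (γ : ℝ → ℝ × ℝ) (s : ℝ) : ℝ × ℝ := ((deriv γ s).2, -(deriv γ s).1)

/-- Signed curvature `κ(s) = −γ″(s)·n(s)`. -/
def curv (γ : ℝ → ℝ × ℝ) (s : ℝ) : ℝ := -(dot2 (deriv (deriv γ) s) (nor γ s))

/-- The biharmonic Green's function `G^B(x,y) = (1/(8π))‖x−y‖² log‖x−y‖`. -/
def GB (x y : ℝ × ℝ) : ℝ :=
  1 / (8 * π) * dot2 (x - y) (x - y) * Real.log (Real.sqrt (dot2 (x - y) (x - y)))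

/-- Directional derivative in the first argument, in the direction `v`. -/
def ddx (v : ℝ × ℝ) (f : ℝ × ℝ → ℝ × ℝ → ℝ) (x y : ℝ × ℝ) : ℝ :=
  deriv (fun e : ℝ => f (x + e • v) y) 0

/-- Directional derivative in the second argument, in the direction `v`. -/
def ddy (v : ℝ × ℝ) (f : ℝ × ℝ → ℝ × ℝ → ℝ) (x y : ℝ × ℝ) : ℝ :=
  deriv (fun e : ℝ => f x (y + e • v)) 0

/-- The supported-plate kernel
`K = G^B_{n_x n_x n_y n_y n_y} + ν G^B_{τ_x τ_x n_y n_y n_y} + α₁ G^B_{n_x n_x n_y τ_y τ_y}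
 + ν α₁ G^B_{τ_x τ_x n_y τ_y τ_y} + α₂ κ(s) G^B_{n_x n_x n_y n_y} + ν α₂ κ(s) G^B_{τ_x τ_x n_y n_y}
 + α₃ κ′(s) G^B_{n_x n_x τ_y} + ν α₃ κ′(s) G^B_{τ_x τ_x τ_y}`
evaluated at `(x, γ(s))`, with `x`-derivatives in the directions `n(t)`, `τ(t)` and
`y`-derivatives in the directions `n(s)`, `τ(s)`. -/
def suppKer (γ : ℝ → ℝ × ℝ) (ν α₁ α₂ α₃ : ℝ) (t : ℝ) (x : ℝ × ℝ) (s : ℝ) : ℝ :=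
  ddx (nor γ t) (ddx (nor γ t) (ddy (nor γ s) (ddy (nor γ s) (ddy (nor γ s) GB)))) x (γ s)
    + ν * ddx (tang γ t) (ddx (tang γ t)
        (ddy (nor γ s) (ddy (nor γ s) (ddy (nor γ s) GB)))) x (γ s)
    + α₁ * ddx (nor γ t) (ddx (nor γ t)
        (ddy (nor γ s) (ddy (tang γ s) (ddy (tang γ s) GB)))) x (γ s)
    + ν * α₁ * ddx (tang γ t) (ddx (tang γ t)
        (ddy (nor γ s) (ddy (tang γ s) (ddy (tang γ s) GB)))) x (γ s)
    + α₂ * curv γ s * ddx (nor γ t) (ddx (nor γ t)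
        (ddy (nor γ s) (ddy (nor γ s) GB))) x (γ s)
    + ν * α₂ * curv γ s * ddx (tang γ t) (ddx (tang γ t)
        (ddy (nor γ s) (ddy (nor γ s) GB))) x (γ s)
    + α₃ * deriv (curv γ) s * ddx (nor γ t) (ddx (nor γ t) (ddy (tang γ s) GB)) x (γ s)
    + ν * α₃ * deriv (curv γ) s * ddx (tang γ t) (ddx (tang γ t) (ddy (tang γ s) GB)) x (γ s)

open scoped ComplexConjugate ContDiff

/-!
In complex notation `8π K` is the real part of a rational function of `z` and `z̄`, where
`z = x - γ(s)`: a sum of poles `(a z̄ + b) / z ^ k`, `1 ≤ k ≤ 4`, with coefficients depending on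
`s`. Along the curve, a pole of order `k + 1` is a total derivative plus a pole of order `k`,
because the derivative of `z̄` is `u⁻²` times that of `z` for the unit tangent `u`. Off the curve
the total derivatives integrate to `0`, and what remains is a simple pole `(a z̄ + b) / z`. At `t`
its coefficient `b` is `-iβ` with `β = 8 c₀ κ(t)² σ(t)`, so its real part is `β` times a Poisson
kernel plus a dominated remainder, which gives the jump `±πβ`. On the curve, `α₂` and `α₃` are
exactly such that the singularities of orders two and one of the real part cancel; then the boundary
terms of the integrations by parts have equal limits from both sides of `t`, and the integral is
again that of the simple pole.
-/

/-! ### The kernel as a rational function of `x - y` -/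

/-- The plane `ℝ × ℝ` identified with `ℂ`. -/
abbrev toComplex : (ℝ × ℝ) ≃L[ℝ] ℂ := Complex.equivRealProdCLM.symm

/-- The kernel `f` is a function `F` of `x - y` off the diagonal. The factor `8π` normalises the
Green's function `GB`. -/
def IsDifferenceKernel (f : ℝ × ℝ → ℝ × ℝ → ℝ) (F : ℂ → ℝ) : Prop :=
  ∀ x y, x ≠ y → 8 * π * f x y = F (toComplex (x - y))

lemma toComplex_sub_ne_zero {x y : ℝ × ℝ} (h : x ≠ y) : toComplex (x - y) ≠ 0 := by
  simpa only [ne_eq, map_eq_zero_iff _ toComplex.injective, sub_eq_zero] using h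

namespace IsDifferenceKernel

variable {f : ℝ × ℝ → ℝ × ℝ → ℝ} {F F' : ℂ → ℝ} {v : ℝ × ℝ}

lemma ddx (hf : IsDifferenceKernel f F)
    (hF : ∀ z ≠ 0, HasLineDerivAt ℝ F (F' z) z (toComplex v)) :
    IsDifferenceKernel (ddx v f) F' := by
  intro x y hxy
  have hne : ∀ᶠ e : ℝ in 𝓝 0, x + e • v ≠ y :=
    ContinuousAt.eventually_ne (by fun_prop) (by simpa using hxy)
  have heq : (fun e : ℝ => 8 * π * f (x + e • v) y) =ᶠ[𝓝 0]
      fun e : ℝ => F (toComplex (x - y) + e • toComplex v) := by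
    filter_upwards [hne] with e he
    rw [hf _ _ he, add_sub_right_comm, map_add, map_smul]
  rw [_root_.ddx, ← deriv_const_mul_field, heq.deriv_eq]
  exact (hF _ (toComplex_sub_ne_zero hxy)).deriv

lemma ddy (hf : IsDifferenceKernel f F)
    (hF : ∀ z ≠ 0, HasLineDerivAt ℝ F (F' z) z (-toComplex v)) :
    IsDifferenceKernel (ddy v f) F' := by
  intro x y hxy
  have hne : ∀ᶠ e : ℝ in 𝓝 0, y + e • v ≠ x :=
    ContinuousAt.eventually_ne (by fun_prop) (by simpa using hxy.symm)
  have heq : (fun e : ℝ => 8 * π * f x (y + e • v)) =ᶠ[𝓝 0]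
      fun e : ℝ => F (toComplex (x - y) + e • -toComplex v) := by
    filter_upwards [hne] with e he
    rw [hf _ _ he.symm, ← sub_sub, map_sub toComplex (x - y), map_smul, smul_neg, sub_eq_add_neg]
  rw [_root_.ddy, ← deriv_const_mul_field, heq.deriv_eq]
  exact (hF _ (toComplex_sub_ne_zero hxy)).deriv

end IsDifferenceKernel

/-- The real part of a homogeneous biharmonic function of degree `-k` with a pole at `0`. -/
def biharmonicPole (P S : ℂ) (k : ℕ) (z : ℂ) : ℝ := ((P * conj z / z + S) / z ^ k).re

lemma hasDerivAt_re {f : ℝ → ℂ} {f' : ℂ} {s : ℝ} (h : HasDerivAt f f' s) :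
    HasDerivAt (fun s => (f s).re) f'.re s :=
  Complex.reCLM.hasFDerivAt.comp_hasDerivAt s h

lemma hasDerivAt_im {f : ℝ → ℂ} {f' : ℂ} {s : ℝ} (h : HasDerivAt f f' s) :
    HasDerivAt (fun s => (f s).im) f'.im s :=
  Complex.imCLM.hasFDerivAt.comp_hasDerivAt s h

lemma hasDerivAt_line (z v : ℂ) : HasDerivAt (fun e : ℝ => z + e • v) v 0 := by
  simpa using ((hasDerivAt_id (0 : ℝ)).smul_const v).const_add z

lemma hasLineDerivAt_re_mul_conj (w z v : ℂ) :
    HasLineDerivAt ℝ (fun z => (z * conj w).re) (v * conj w).re z v :=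
  hasDerivAt_re ((hasDerivAt_line z v).mul_const _)

lemma hasLineDerivAt_normSq (z v : ℂ) :
    HasLineDerivAt ℝ (fun z => Complex.normSq z) (2 * (z * conj v).re) z v := by
  have hline := hasDerivAt_line z v
  have h := hasDerivAt_re (hline.mul hline.star)
  simp only [Pi.mul_apply, RCLike.star_def, Complex.mul_conj, Complex.ofReal_re] at h
  refine h.congr_deriv ?_
  simp only [zero_smul, add_zero, Complex.add_re, Complex.mul_re, Complex.conj_re, Complex.conj_im]
  ring

lemma hasLineDerivAt_log_normSq {z : ℂ} (hz : z ≠ 0) (v : ℂ) :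
    HasLineDerivAt ℝ (fun z => log (Complex.normSq z)) (2 * (v / z).re) z v :=
  (HasDerivAt.log (hasLineDerivAt_normSq z v) (by simpa using hz)).congr_deriv (by
    simp only [zero_smul, add_zero, Complex.div_re, Complex.mul_re, Complex.conj_re,
      Complex.conj_im]
    ring)

lemma hasLineDerivAt_biharmonicPole (P S : ℂ) (k : ℕ) {z : ℂ} (hz : z ≠ 0) (v : ℂ) :
    HasLineDerivAt ℝ (biharmonicPole P S k)
      (biharmonicPole (-(k + 1) * P * v) (P * conj v - k * S * v) (k + 1) z) z v := by
  have hline := hasDerivAt_line z v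
  have hz' : z + (0 : ℝ) • v ≠ 0 := by simpa using hz
  have h := hasDerivAt_re ((((hline.star.const_mul P).div hline hz').add_const S).div
    (hline.pow k) (pow_ne_zero k hz'))
  refine h.congr_deriv ?_
  rw [biharmonicPole]
  congr 1
  rcases k with _ | k <;>
  · simp only [zero_smul, add_zero, RCLike.star_def, Nat.add_sub_cancel, Pi.pow_apply, Pi.div_apply]
    field_simp
    push_cast
    ring

lemma isDifferenceKernel_GB :
    IsDifferenceKernel GB fun z => Complex.normSq z * log (Complex.normSq z) / 2 := by
  intro x y _
  have hdot : dot2 (x - y) (x - y) = Complex.normSq (toComplex (x - y)) := by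
    simp [dot2, Complex.normSq_apply]
  rw [GB, hdot, Real.log_sqrt (Complex.normSq_nonneg _)]
  field_simp

/-- The derivative of `‖z‖² log ‖z‖` in direction `v`. -/
def greenDeriv (v z : ℂ) : ℝ := (z * conj v).re * (log (Complex.normSq z) + 1)

/-- The second derivative of `‖z‖² log ‖z‖` in directions `v` and `w`. -/
def greenDerivTwo (v w z : ℂ) : ℝ :=
  (w * conj v).re * (log (Complex.normSq z) + 2) + biharmonicPole (v * w) 0 0 z

lemma hasLineDerivAt_green {z : ℂ} (hz : z ≠ 0) (v : ℂ) :
    HasLineDerivAt ℝ (fun z => Complex.normSq z * log (Complex.normSq z) / 2)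
      (greenDeriv v z) z v := by
  have hnorm : Complex.normSq z ≠ 0 := by simpa using hz
  have hdiv : Complex.normSq z * (v / z).re = (z * conj v).re := by
    simp only [Complex.div_re, Complex.mul_re, Complex.conj_re, Complex.conj_im, mul_neg,
      sub_neg_eq_add]
    field_simp
  have h :=
    (HasDerivAt.mul (hasLineDerivAt_normSq z v) (hasLineDerivAt_log_normSq hz v)).div_const 2
  refine h.congr_deriv ?_
  simp only [zero_smul, add_zero, greenDeriv]
  linear_combination hdiv

lemma hasLineDerivAt_greenDeriv (v : ℂ) {z : ℂ} (hz : z ≠ 0) (w : ℂ) :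
    HasLineDerivAt ℝ (greenDeriv v) (greenDerivTwo v w z) z w := by
  have h := HasDerivAt.mul (hasLineDerivAt_re_mul_conj v z w)
    ((hasLineDerivAt_log_normSq hz w).add_const 1)
  refine h.congr_deriv ?_
  have hnorm : z.re ^ 2 + z.im ^ 2 ≠ 0 := by
    simpa [Complex.normSq_apply, ← pow_two] using Complex.normSq_eq_zero.not.mpr hz
  simp only [zero_smul, add_zero, greenDerivTwo, biharmonicPole, pow_zero, div_one,
    Complex.div_re, Complex.mul_re, Complex.mul_im, Complex.conj_re, Complex.conj_im,
    Complex.normSq_apply, ← pow_two]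
  field_simp
  ring

lemma hasLineDerivAt_greenDerivTwo (v w : ℂ) {z : ℂ} (hz : z ≠ 0) (u : ℂ) :
    HasLineDerivAt ℝ (greenDerivTwo v w)
      (biharmonicPole (-(v * w * u))
        (v * w * conj u + v * u * conj w + w * u * conj v) 1 z) z u := by
  have h := HasDerivAt.add
    (((hasLineDerivAt_log_normSq hz u).add_const 2).const_mul (w * conj v).re)
    (hasLineDerivAt_biharmonicPole (v * w) 0 0 hz u)
  refine h.congr_deriv ?_
  have hsymm : v * conj w + w * conj v = ((2 * (w * conj v).re : ℝ) : ℂ) := by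
    simpa only [map_mul, Complex.conj_conj, add_comm, mul_comm] using
      Complex.add_conj (w * conj v)
  have hre : (w * conj v).re * (2 * (u / z).re) = ((v * conj w + w * conj v) * (u / z)).re := by
    rw [hsymm, Complex.re_ofReal_mul]
    ring
  simp only [biharmonicPole]
  rw [hre, ← Complex.add_re]
  congr 1
  push_cast
  field_simp
  ring

/-- The plate bending operator `∂ₙ² + ν ∂_τ²` acting on the first argument of a kernel. -/
def bending (ν : ℝ) (n τ : ℝ × ℝ) (f : ℝ × ℝ → ℝ × ℝ → ℝ) (x y : ℝ × ℝ) : ℝ :=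
  ddx n (ddx n f) x y + ν * ddx τ (ddx τ f) x y

lemma biharmonicPole_add_mul (P S P' S' : ℂ) (r : ℝ) (k : ℕ) (z : ℂ) :
    biharmonicPole P S k z + r * biharmonicPole P' S' k z =
      biharmonicPole (P + r * P') (S + r * S') k z := by
  simp only [biharmonicPole]
  rw [← Complex.re_ofReal_mul, ← Complex.add_re]
  ring_nf

lemma biharmonicPole_conj_mul_of_norm_eq_one {T : ℂ} (hT : ‖T‖ = 1) (P S : ℂ) (k : ℕ) (z : ℂ) :
    biharmonicPole P S k (conj T * z) = biharmonicPole (P * T ^ (k + 2)) (S * T ^ k) k z := by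
  have hT0 : T ≠ 0 := norm_ne_zero_iff.mp (by simp [hT])
  simp only [biharmonicPole, map_mul, Complex.conj_conj]
  rw [← Complex.inv_eq_conj hT]
  simp only [mul_pow, inv_pow]
  congr 1
  field_simp [hT0]
  ring

lemma mul_conj_eq_one_of_norm_eq_one {T : ℂ} (hT : ‖T‖ = 1) : T * conj T = 1 := by
  rw [Complex.mul_conj, Complex.normSq_eq_norm_sq, hT, one_pow, Complex.ofReal_one]

section Bending

variable {f : ℝ × ℝ → ℝ × ℝ → ℝ}

lemma IsDifferenceKernel.bending {A B C : ℂ} {k : ℕ}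
    (hf : ∀ v, IsDifferenceKernel (_root_.ddx v (_root_.ddx v f))
      (biharmonicPole (A * toComplex v ^ 2)
        (B * (toComplex v * conj (toComplex v)) + C * toComplex v ^ 2) k))
    (ν : ℝ) {n τ : ℝ × ℝ} (hn : toComplex n = -Complex.I * toComplex τ)
    (hτ : ‖toComplex τ‖ = 1) :
    IsDifferenceKernel (bending ν n τ f) (biharmonicPole (-(1 - ν) * A * toComplex τ ^ 2)
      ((1 + ν) * B - (1 - ν) * C * toComplex τ ^ 2) k) := by
  intro x y hxy
  have hconj := mul_conj_eq_one_of_norm_eq_one hτ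
  rw [_root_.bending, mul_add, mul_left_comm, hf n x y hxy, hf τ x y hxy, biharmonicPole_add_mul]
  simp only [hn, map_mul, map_neg, Complex.conj_I, mul_pow, neg_sq, Complex.I_sq]
  congr 1
  · ring
  · linear_combination (1 + ν) * B * hconj - B * toComplex τ * conj (toComplex τ) * Complex.I_sq

lemma IsDifferenceKernel.ddx_biharmonicPole {P S : ℂ} {k : ℕ}
    (hf : IsDifferenceKernel f (biharmonicPole P S k)) (v : ℝ × ℝ) :
    IsDifferenceKernel (_root_.ddx v f) (biharmonicPole (-(k + 1) * P * toComplex v)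
      (P * conj (toComplex v) - k * S * toComplex v) (k + 1)) :=
  hf.ddx fun _ hz => hasLineDerivAt_biharmonicPole P S k hz _

lemma IsDifferenceKernel.congr {F G : ℂ → ℝ} (hf : IsDifferenceKernel f F) (h : F = G) :
    IsDifferenceKernel f G := h ▸ hf

variable (a b c : ℝ × ℝ)

lemma isDifferenceKernel_ddy_GB :
    IsDifferenceKernel (ddy a GB) (greenDeriv (-toComplex a)) :=
  isDifferenceKernel_GB.ddy fun _ hz => hasLineDerivAt_green hz _

lemma isDifferenceKernel_ddy_ddy_GB :
    IsDifferenceKernel (ddy b (ddy a GB)) (greenDerivTwo (-toComplex a) (-toComplex b)) :=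
  (isDifferenceKernel_ddy_GB a).ddy fun _ hz => hasLineDerivAt_greenDeriv _ hz _

lemma isDifferenceKernel_ddy_ddy_ddy_GB :
    IsDifferenceKernel (ddy c (ddy b (ddy a GB)))
      (biharmonicPole (toComplex a * toComplex b * toComplex c)
        (-(toComplex a * toComplex b * conj (toComplex c) +
          toComplex a * toComplex c * conj (toComplex b) +
          toComplex b * toComplex c * conj (toComplex a))) 1) := by
  have h := (isDifferenceKernel_ddy_ddy_GB a b).ddy fun _ hz =>
    hasLineDerivAt_greenDerivTwo _ _ hz (-toComplex c)
  exact h.congr (congrArg₂ (biharmonicPole · · 1) (by ring) (by simp only [map_neg]; ring))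

variable {n τ : ℝ × ℝ} (hn : toComplex n = -Complex.I * toComplex τ) (hτ : ‖toComplex τ‖ = 1)
  (ν : ℝ)
include hn hτ

lemma isDifferenceKernel_bending_ddy_GB :
    IsDifferenceKernel (bending ν n τ (ddy a GB))
      (biharmonicPole (-(1 - ν) * toComplex a * toComplex τ ^ 2)
        (-2 * (1 + ν) * toComplex a + (1 - ν) * conj (toComplex a) * toComplex τ ^ 2) 1) := by
  have hxx (v : ℝ × ℝ) := ((isDifferenceKernel_ddy_GB a).ddx (v := v) fun _ hz =>
    hasLineDerivAt_greenDeriv _ hz _).ddx (v := v) fun _ hz =>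
    hasLineDerivAt_greenDerivTwo _ _ hz _
  have h := IsDifferenceKernel.bending (A := toComplex a) (B := -2 * toComplex a)
    (C := -conj (toComplex a)) (k := 1) (fun v => (hxx v).congr
      (congrArg₂ (biharmonicPole · · 1) (by ring) (by simp only [map_neg]; ring))) ν hn hτ
  exact h.congr (congrArg₂ (biharmonicPole · · 1) (by ring) (by ring))

lemma isDifferenceKernel_bending_ddy_ddy_GB :
    IsDifferenceKernel (bending ν n τ (ddy b (ddy a GB)))
      (biharmonicPole (-2 * (1 - ν) * toComplex a * toComplex b * toComplex τ ^ 2)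
        (-2 * (1 + ν) * toComplex a * toComplex b + (1 - ν) *
          (toComplex a * conj (toComplex b) + toComplex b * conj (toComplex a)) * toComplex τ ^ 2)
        2) := by
  have hxx (v : ℝ × ℝ) := ((isDifferenceKernel_ddy_ddy_GB a b).ddx (v := v) fun _ hz =>
    hasLineDerivAt_greenDerivTwo _ _ hz _).ddx_biharmonicPole v
  have h := IsDifferenceKernel.bending (A := 2 * toComplex a * toComplex b)
    (B := -2 * toComplex a * toComplex b)
    (C := -(toComplex a * conj (toComplex b) + toComplex b * conj (toComplex a)))
    (k := 2) (fun v => (hxx v).congr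
      (congrArg₂ (biharmonicPole · · 2) (by push_cast; ring)
        (by simp only [map_neg]; push_cast; ring))) ν hn hτ
  exact h.congr (congrArg₂ (biharmonicPole · · 2) (by ring) (by ring))

lemma isDifferenceKernel_bending_ddy_ddy_ddy_GB :
    IsDifferenceKernel (bending ν n τ (ddy c (ddy b (ddy a GB))))
      (biharmonicPole (-6 * (1 - ν) * toComplex a * toComplex b * toComplex c * toComplex τ ^ 2)
        (-4 * (1 + ν) * toComplex a * toComplex b * toComplex c + 2 * (1 - ν) *
          (toComplex a * toComplex b * conj (toComplex c) +
            toComplex a * toComplex c * conj (toComplex b) +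
            toComplex b * toComplex c * conj (toComplex a)) * toComplex τ ^ 2) 3) := by
  have hxx (v : ℝ × ℝ) :=
    ((isDifferenceKernel_ddy_ddy_ddy_GB a b c).ddx_biharmonicPole v).ddx_biharmonicPole v
  have h := IsDifferenceKernel.bending (A := 6 * toComplex a * toComplex b * toComplex c)
    (B := -4 * toComplex a * toComplex b * toComplex c)
    (C := -2 * (toComplex a * toComplex b * conj (toComplex c) +
      toComplex a * toComplex c * conj (toComplex b) +
      toComplex b * toComplex c * conj (toComplex a)))
    (k := 3) (fun v => (hxx v).congr
      (congrArg₂ (biharmonicPole · · 3) (by push_cast; ring) (by push_cast; ring))) ν hn hτ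
  exact h.congr (congrArg₂ (biharmonicPole · · 3) (by ring) (by ring))

end Bending

section PlateKernel

variable {x y n τ m μ : ℝ × ℝ} (hxy : x ≠ y)
  (hn : toComplex n = -Complex.I * toComplex τ) (hτ : ‖toComplex τ‖ = 1)
  (hm : toComplex m = -Complex.I * toComplex μ) (hμ : ‖toComplex μ‖ = 1) (ν : ℝ)
include hxy hn hτ

lemma bending_firstOrder_eq :
    8 * π * bending ν n τ (ddy μ GB) x y =
      biharmonicPole (-(1 - ν) * (conj (toComplex τ) * toComplex μ))
        ((1 - ν) * conj (conj (toComplex τ) * toComplex μ)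
          - 2 * (1 + ν) * (conj (toComplex τ) * toComplex μ)) 1
        (conj (toComplex τ) * toComplex (x - y)) := by
  have hconj := mul_conj_eq_one_of_norm_eq_one hτ
  rw [isDifferenceKernel_bending_ddy_GB μ hn hτ ν x y hxy,
    biharmonicPole_conj_mul_of_norm_eq_one hτ, map_mul, Complex.conj_conj]
  refine congrArg₂ (biharmonicPole · · 1 _) ?_ ?_
  · linear_combination (1 - ν) * toComplex μ * toComplex τ ^ 2 * hconj
  · linear_combination 2 * (1 + ν) * toComplex μ * hconj

include hm hμ

lemma bending_secondOrder_eq :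
    8 * π * bending ν n τ (ddy m (ddy m GB)) x y =
      biharmonicPole (2 * (1 - ν) * (conj (toComplex τ) * toComplex μ) ^ 2)
        (2 * (1 - ν) + 2 * (1 + ν) * (conj (toComplex τ) * toComplex μ) ^ 2) 2
        (conj (toComplex τ) * toComplex (x - y)) := by
  have hτ0 : toComplex τ ≠ 0 := norm_ne_zero_iff.mp (by simp [hτ])
  have hμ0 : toComplex μ ≠ 0 := norm_ne_zero_iff.mp (by simp [hμ])
  rw [isDifferenceKernel_bending_ddy_ddy_GB m m hn hτ ν x y hxy,
    biharmonicPole_conj_mul_of_norm_eq_one hτ]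
  simp only [hm, map_mul, map_neg, Complex.conj_I, ← Complex.inv_eq_conj hτ,
    ← Complex.inv_eq_conj hμ]
  congr 1 <;> field_simp <;> rw [Complex.I_sq] <;> ring

lemma bending_thirdOrder_eq :
    8 * π * (bending ν n τ (ddy m (ddy m (ddy m GB))) x y
        + (2 - ν) * bending ν n τ (ddy m (ddy μ (ddy μ GB))) x y) =
      biharmonicPole (6 * Complex.I * (1 - ν) ^ 2 * (conj (toComplex τ) * toComplex μ) ^ 3)
        (4 * Complex.I * (1 - ν) * (1 + ν) * (conj (toComplex τ) * toComplex μ) ^ 3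
          - 2 * Complex.I * (1 - ν) * (5 - ν) * (conj (toComplex τ) * toComplex μ)) 3
        (conj (toComplex τ) * toComplex (x - y)) := by
  have hτ0 : toComplex τ ≠ 0 := norm_ne_zero_iff.mp (by simp [hτ])
  have hμ0 : toComplex μ ≠ 0 := norm_ne_zero_iff.mp (by simp [hμ])
  rw [mul_add, mul_left_comm, isDifferenceKernel_bending_ddy_ddy_ddy_GB m m m hn hτ ν x y hxy,
    isDifferenceKernel_bending_ddy_ddy_ddy_GB μ μ m hn hτ ν x y hxy, biharmonicPole_add_mul,
    biharmonicPole_conj_mul_of_norm_eq_one hτ]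
  simp only [hm, map_mul, map_neg, Complex.conj_I, ← Complex.inv_eq_conj hτ,
    ← Complex.inv_eq_conj hμ]
  congr 1 <;> field_simp <;> push_cast
  · linear_combination (1 - ν) * toComplex τ ^ 5 * Complex.I_sq
  · linear_combination
      (4 * (1 + ν) * toComplex μ ^ 2 + 6 * (1 - ν) * toComplex τ ^ 2) * Complex.I_sq

end PlateKernel

lemma toComplex_nor (γ : ℝ → ℝ × ℝ) (s : ℝ) :
    toComplex (nor γ s) = -Complex.I * toComplex (tang γ s) := by
  apply Complex.ext <;> simp [nor, tang]

lemma suppKer_eq_bending (γ : ℝ → ℝ × ℝ) (ν α₁ α₂ α₃ t : ℝ) (x : ℝ × ℝ) (s : ℝ) :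
    suppKer γ ν α₁ α₂ α₃ t x s =
      (bending ν (nor γ t) (tang γ t) (ddy (nor γ s) (ddy (nor γ s) (ddy (nor γ s) GB))) x (γ s)
        + α₁ * bending ν (nor γ t) (tang γ t)
          (ddy (nor γ s) (ddy (tang γ s) (ddy (tang γ s) GB))) x (γ s))
      + α₂ * curv γ s * bending ν (nor γ t) (tang γ t) (ddy (nor γ s) (ddy (nor γ s) GB)) x (γ s)
      + α₃ * deriv (curv γ) s * bending ν (nor γ t) (tang γ t) (ddy (tang γ s) GB) x (γ s) := by
  simp only [suppKer, bending]
  ring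

/-- `8π` times the supported-plate kernel in the frame rotated so that the tangent at the target
is `1`: `u` is the tangent at the source, `κ` and `κ'` are the curvature and its derivative there,
and `z` is the target minus the source. -/
def plateKernel (ν α₂ α₃ : ℝ) (u : ℂ) (κ κ' : ℝ) (z : ℂ) : ℝ :=
  biharmonicPole (6 * Complex.I * (1 - ν) ^ 2 * u ^ 3)
      (4 * Complex.I * (1 - ν) * (1 + ν) * u ^ 3 - 2 * Complex.I * (1 - ν) * (5 - ν) * u) 3 z
    + α₂ * κ * biharmonicPole (2 * (1 - ν) * u ^ 2) (2 * (1 - ν) + 2 * (1 + ν) * u ^ 2) 2 z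
    + α₃ * κ' * biharmonicPole (-(1 - ν) * u) ((1 - ν) * conj u - 2 * (1 + ν) * u) 1 z

theorem suppKer_eq_plateKernel {γ : ℝ → ℝ × ℝ} (hγ : ∀ s, ‖toComplex (tang γ s)‖ = 1)
    (ν α₂ α₃ t : ℝ) {x : ℝ × ℝ} {s : ℝ} (hx : x ≠ γ s) :
    8 * π * suppKer γ ν (2 - ν) α₂ α₃ t x s =
      plateKernel ν α₂ α₃ (conj (toComplex (tang γ t)) * toComplex (tang γ s)) (curv γ s)
        (deriv (curv γ) s) (conj (toComplex (tang γ t)) * toComplex (x - γ s)) := by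
  have hn := toComplex_nor γ t
  have hm := toComplex_nor γ s
  rw [suppKer_eq_bending, plateKernel, ← bending_thirdOrder_eq hx hn (hγ t) hm (hγ s),
    ← bending_secondOrder_eq hx hn (hγ t) hm (hγ s), ← bending_firstOrder_eq hx hn (hγ t)]
  ring

/-! ### Real analysis around an isolated singularity -/

lemma isBigO_nhdsSet_of_isCompact {X E F : Type*} [TopologicalSpace X] [SeminormedAddCommGroup E]
    [SeminormedAddCommGroup F] {f : X → E} {g : X → F} {K : Set X} (hK : IsCompact K)
    (hfg : ∀ x ∈ K, f =O[𝓝 x] g) : f =O[𝓝ˢ K] g := by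
  refine hK.induction_on (p := fun s => f =O[𝓝ˢ s] g) (by simp)
    (fun s t hst ht => ht.mono (nhdsSet_mono hst))
    (fun s t hs ht => by rw [nhdsSet_union]; exact hs.sup ht) fun x hx => ?_
  obtain ⟨C, hC⟩ := (hfg x hx).bound
  obtain ⟨U, hU, hUo, hxU⟩ := eventually_nhds_iff.mp hC
  exact ⟨U, mem_nhdsWithin_of_mem_nhds (hUo.mem_nhds hxU),
    Asymptotics.IsBigO.of_bound C (mem_of_superset hUo.mem_nhdsSet_self hU)⟩

lemma exists_forall_norm_le_mul_of_isBigO {X E F : Type*} [TopologicalSpace X]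
    [SeminormedAddCommGroup E] [SeminormedAddCommGroup F] {f : X → E} {g : X → F} {K : Set X}
    (hK : IsCompact K) (hfg : ∀ x ∈ K, f =O[𝓝 x] g) : ∃ C, ∀ x ∈ K, ‖f x‖ ≤ C * ‖g x‖ :=
  ((isBigO_nhdsSet_of_isCompact hK hfg).mono principal_le_nhdsSet).bound

lemma isBigO_of_continuousAt_of_ne_zero {X E F : Type*} [TopologicalSpace X]
    [SeminormedAddCommGroup E] [NormedAddCommGroup F] {f : X → E} {g : X → F} {x : X}
    (hf : ContinuousAt f x) (hg : ContinuousAt g x) (hgx : g x ≠ 0) : f =O[𝓝 x] g := by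
  refine (hf.isBigO_one ℝ).trans ((Asymptotics.isBigO_const_left_iff_pos_le_norm
    one_ne_zero).mpr ⟨‖g x‖ / 2, half_pos (norm_pos_iff.mpr hgx), ?_⟩)
  exact (hg.norm.eventually_const_lt (half_lt_self (norm_pos_iff.mpr hgx))).mono fun _ => le_of_lt

lemma exists_forall_norm_le_of_isBigO_one_punctured {E : Type*} [SeminormedAddCommGroup E]
    {f : ℝ → E} {a b c : ℝ} (hf : ∀ s ∈ Set.Icc a b, s ≠ c → ContinuousAt f s)
    (hO : f =O[𝓝[≠] c] (1 : ℝ → ℝ)) : ∃ M : ℝ, ∀ s ∈ Set.Icc a b, ‖f s‖ ≤ M := by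
  suffices h : ∀ s ∈ Set.Icc a b, f =O[𝓝 s] (1 : ℝ → ℝ) by
    simpa using exists_forall_norm_le_mul_of_isBigO isCompact_Icc h
  intro s hs
  rcases eq_or_ne s c with rfl | hsc
  · rw [← nhdsNE_sup_pure s]
    have hpure : f =O[pure s] (1 : ℝ → ℝ) := Asymptotics.IsBigO.of_bound ‖f s‖ (by simp)
    exact hO.sup hpure
  · exact (hf s hs hsc).isBigO_one ℝ

lemma exists_forall_norm_div_pow_le {f : ℝ → ℂ} (hf : Continuous f) {n : ℕ}
    (hO : f =O[𝓝 0] fun s : ℝ => s ^ n) (a b : ℝ) :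
    ∃ C, ∀ s ∈ Set.Icc a b, ‖f s / (s : ℂ) ^ n‖ ≤ C := by
  refine exists_forall_norm_le_of_isBigO_one_punctured (c := 0) (fun s _ hs =>
    hf.continuousAt.div (by fun_prop) (pow_ne_zero n (Complex.ofReal_ne_zero.mpr hs))) ?_
  obtain ⟨C, hC0, hC⟩ := hO.exists_nonneg
  refine Asymptotics.IsBigO.of_bound C ((hC.bound.filter_mono nhdsWithin_le_nhds).mono
    fun s hs => ?_)
  simpa using div_le_of_le_mul₀ (by positivity) hC0 hs

lemma isBigO_pow_succ_of_hasDerivAt {E : Type*} [NormedAddCommGroup E] [NormedSpace ℝ E]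
    {f f' : ℝ → E} {n : ℕ} (hf : ∀ s, HasDerivAt f (f' s) s) (h0 : f 0 = 0)
    (hO : f' =O[𝓝 0] fun s : ℝ => s ^ n) : f =O[𝓝 0] fun s : ℝ => s ^ (n + 1) := by
  obtain ⟨C, hC0, hC⟩ := hO.exists_nonneg
  obtain ⟨ε, hε, hball⟩ := Metric.eventually_nhds_iff.mp hC.bound
  refine Asymptotics.IsBigO.of_bound C (Metric.eventually_nhds_iff.mpr ⟨ε, hε, fun s hs => ?_⟩)
  have hbound : ∀ x ∈ Set.uIcc 0 s, ‖f' x‖ ≤ C * ‖s ^ n‖ := by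
    intro x hx
    have hxs : |x| ≤ |s| := by simpa using Set.abs_sub_left_of_mem_uIcc hx
    have hxε : dist x 0 < ε := lt_of_le_of_lt (by simpa using hxs) hs
    refine (hball hxε).trans ?_
    simp only [norm_pow, Real.norm_eq_abs]
    gcongr
  have hmean := (convex_uIcc 0 s).norm_image_sub_le_of_norm_hasDerivWithin_le
    (fun x _ => (hf x).hasDerivWithinAt) hbound Set.left_mem_uIcc Set.right_mem_uIcc
  rwa [h0, sub_zero, sub_zero, mul_assoc, ← norm_mul, ← pow_succ] at hmean

lemma intervalIntegrable_of_isBigO_one_punctured {f : ℝ → ℝ} {a b c : ℝ} (hab : a ≤ b)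
    (hf : ∀ s ∈ Set.Icc a b, s ≠ c → ContinuousAt f s) (hO : f =O[𝓝[≠] c] (1 : ℝ → ℝ)) :
    IntervalIntegrable f volume a b := by
  obtain ⟨M, hM⟩ := exists_forall_norm_le_of_isBigO_one_punctured hf hO
  have hcont : ContinuousOn f (Set.Icc a b \ {c}) := fun s hs =>
    (hf s hs.1 hs.2).continuousWithinAt
  have hmeas : AEStronglyMeasurable f (volume.restrict (Set.Icc a b)) := by
    rw [← Measure.restrict_congr_set (sdiff_null_ae_eq_self (measure_singleton c))]
    exact hcont.aestronglyMeasurable (measurableSet_Icc.diff (measurableSet_singleton c))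
  rw [intervalIntegrable_iff_integrableOn_Icc_of_le hab]
  exact Integrable.of_bound hmeas M (ae_restrict_of_forall_mem measurableSet_Icc hM)

lemma integral_eq_sub_of_hasDerivAt_punctured {F f : ℝ → ℝ} {a b c y : ℝ} (hac : a < c)
    (hcb : c < b) (hF : ∀ s ∈ Set.Icc a b, s ≠ c → HasDerivAt F (f s) s)
    (hf : IntervalIntegrable f volume a b) (hlim : Tendsto F (𝓝[≠] c) (𝓝 y)) :
    ∫ s in a..b, f s = F b - F a := by
  have hc : c ∈ Set.uIcc a b := Set.mem_uIcc_of_le hac.le hcb.le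
  have hfleft : IntervalIntegrable f volume a c :=
    hf.mono_set (Set.uIcc_subset_uIcc Set.left_mem_uIcc hc)
  have hfright : IntervalIntegrable f volume c b :=
    hf.mono_set (Set.uIcc_subset_uIcc hc Set.right_mem_uIcc)
  have hFa := (hF a ⟨le_rfl, (hac.trans hcb).le⟩ hac.ne).continuousAt.tendsto
  have hFb := (hF b ⟨(hac.trans hcb).le, le_rfl⟩ hcb.ne').continuousAt.tendsto
  have hleft : ∫ s in a..c, f s = y - F a :=
    intervalIntegral.integral_eq_sub_of_hasDerivAt_of_tendsto hac
      (fun s hs => hF s ⟨hs.1.le, (hs.2.trans hcb).le⟩ hs.2.ne) hfleft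
      (hFa.mono_left nhdsWithin_le_nhds) (hlim.mono_left (nhdsLT_le_nhdsNE c))
  have hright : ∫ s in c..b, f s = F b - y :=
    intervalIntegral.integral_eq_sub_of_hasDerivAt_of_tendsto hcb
      (fun s hs => hF s ⟨(hac.trans hs.1).le, hs.2.le⟩ hs.1.ne') hfright
      (hlim.mono_left (nhdsGT_le_nhdsNE c)) (hFb.mono_left nhdsWithin_le_nhds)
  rw [← intervalIntegral.integral_add_adjacent_intervals hfleft hfright, hleft, hright]
  ring

lemma isBigO_one_of_hasDerivAt_of_convex {E : Type*} [NormedAddCommGroup E] [NormedSpace ℝ E]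
    {F f : ℝ → E} {S : Set ℝ} (hS : Convex ℝ S) (hSb : Bornology.IsBounded S) {C : ℝ}
    (hF : ∀ s ∈ S, HasDerivAt F (f s) s) (hC : ∀ s ∈ S, ‖f s‖ ≤ C) :
    F =O[𝓟 S] (1 : ℝ → ℝ) := by
  rcases S.eq_empty_or_nonempty with rfl | ⟨r, hr⟩
  · simp
  obtain ⟨R, hR⟩ := hSb.exists_norm_le
  refine Asymptotics.IsBigO.of_bound (‖F r‖ + C * (2 * R))
    (Filter.eventually_principal.mpr fun s hs => ?_)
  have hC0 : 0 ≤ C := (norm_nonneg _).trans (hC r hr)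
  have hmean := hS.norm_image_sub_le_of_norm_hasDerivWithin_le
    (fun x hx => (hF x hx).hasDerivWithinAt) hC hr hs
  have hdist : ‖s - r‖ ≤ 2 * R :=
    (norm_sub_le s r).trans (by linarith [hR s hs, hR r hr])
  have htri : ‖F s‖ ≤ ‖F r‖ + ‖F s - F r‖ := norm_le_norm_add_norm_sub' _ _
  have := mul_le_mul_of_nonneg_left hdist hC0
  simp only [Pi.one_apply, norm_one, mul_one]
  linarith

lemma isBigO_one_of_hasDerivAt_punctured {E : Type*} [NormedAddCommGroup E] [NormedSpace ℝ E]
    {F f : ℝ → E} {c : ℝ} (hF : ∀ᶠ s in 𝓝[≠] c, HasDerivAt F (f s) s)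
    (hO : f =O[𝓝[≠] c] (1 : ℝ → ℝ)) : F =O[𝓝[≠] c] (1 : ℝ → ℝ) := by
  obtain ⟨C, hC⟩ := hO.bound
  rw [← nhdsLT_sup_nhdsGT, eventually_sup] at hF hC
  rw [← nhdsLT_sup_nhdsGT]
  refine Asymptotics.IsBigO.sup ?_ ?_
  · obtain ⟨a, ha, hFC⟩ := mem_nhdsLT_iff_exists_Ioo_subset.mp (hF.1.and hC.1)
    exact (isBigO_one_of_hasDerivAt_of_convex (convex_Ioo a c) (Metric.isBounded_Ioo a c)
      (fun s hs => (hFC hs).1) fun s hs => by simpa using (hFC hs).2).mono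
      (le_principal_iff.mpr (Ioo_mem_nhdsLT ha))
  · obtain ⟨b, hb, hFC⟩ := mem_nhdsGT_iff_exists_Ioo_subset.mp (hF.2.and hC.2)
    exact (isBigO_one_of_hasDerivAt_of_convex (convex_Ioo c b) (Metric.isBounded_Ioo c b)
      (fun s hs => (hFC hs).1) fun s hs => by simpa using (hFC hs).2).mono
      (le_principal_iff.mpr (Ioo_mem_nhdsGT hb))

lemma integral_poisson (l : ℝ) {h : ℝ} (hh : h ≠ 0) :
    ∫ s in (-l)..l, h / (s ^ 2 + h ^ 2) = 2 * arctan (l / h) := by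
  have hpos (s : ℝ) : s ^ 2 + h ^ 2 ≠ 0 := by positivity
  have hderiv (s : ℝ) : HasDerivAt (fun s => arctan (s / h)) (h / (s ^ 2 + h ^ 2)) s := by
    refine ((hasDerivAt_id s).div_const h).arctan.congr_deriv ?_
    have := hpos s
    simp only [id]
    field_simp
    ring
  rw [intervalIntegral.integral_eq_sub_of_hasDerivAt fun s _ => hderiv s, neg_div, arctan_neg]
  · ring
  · exact Continuous.intervalIntegrable (by fun_prop (disch := simp [hpos])) _ _

lemma isLittleO_sub_taylor_term {f : ℝ → ℝ} {k : ℕ} (hf : ContDiff ℝ k f)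
    (hzero : ∀ j < k, iteratedDeriv j f 0 = 0) :
    (fun s => f s - iteratedDeriv k f 0 / k.factorial * s ^ k) =o[𝓝 0] fun s : ℝ => s ^ k := by
  have h := taylor_isLittleO_univ hf (x₀ := 0)
  simp only [taylor_within_apply, iteratedDerivWithin_univ, sub_zero, Finset.sum_range_succ,
    smul_eq_mul] at h
  refine h.congr_left fun s => ?_
  rw [Finset.sum_eq_zero fun j hj => by rw [hzero j (Finset.mem_range.mp hj), mul_zero]]
  ring

lemma iteratedDeriv_eq_zero_of_isBigO {f : ℝ → ℝ} {m : ℕ} (hf : ContDiff ℝ m f)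
    (hO : f =O[𝓝[≠] 0] fun s : ℝ => s ^ m) {k : ℕ} (hk : k < m) : iteratedDeriv k f 0 = 0 := by
  induction k using Nat.strong_induction_on with
  | _ k ih =>
    have htaylor := (isLittleO_sub_taylor_term (hf.of_le (mod_cast hk.le))
      fun j hj => ih j hj (hj.trans hk)).mono (nhdsWithin_le_nhds (s := {0}ᶜ))
    have hf_small : f =o[𝓝[≠] 0] fun s : ℝ => s ^ k :=
      hO.trans_isLittleO ((Asymptotics.isLittleO_pow_pow hk).mono nhdsWithin_le_nhds)
    have hterm := (hf_small.sub htaylor).congr_left fun s => sub_sub_cancel _ _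
    have hpow : ∀ᶠ s in 𝓝[≠] (0 : ℝ), s ^ k ≠ 0 := by
      filter_upwards [self_mem_nhdsWithin] with s hs using pow_ne_zero k hs
    by_contra hne
    exact Asymptotics.isLittleO_irrefl hpow.frequently ((Asymptotics.isLittleO_const_mul_left_iff
      (div_ne_zero hne (Nat.cast_ne_zero.mpr k.factorial_ne_zero))).mp hterm)

lemma exists_tendsto_div_pow_of_isBigO {f : ℝ → ℝ} {m : ℕ} (hf : ContDiff ℝ m f)
    (hO : f =O[𝓝[≠] 0] fun s : ℝ => s ^ m) :
    ∃ c : ℝ, Tendsto (fun s => f s / s ^ m) (𝓝[≠] 0) (𝓝 c) := by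
  have htaylor := (isLittleO_sub_taylor_term hf
    fun j hj => iteratedDeriv_eq_zero_of_isBigO hf hO hj).mono (nhdsWithin_le_nhds (s := {0}ᶜ))
  refine ⟨0 + iteratedDeriv m f 0 / m.factorial,
    (htaylor.tendsto_div_nhds_zero.add_const _).congr' ?_⟩
  filter_upwards [self_mem_nhdsWithin] with s hs
  have hs : s ^ m ≠ 0 := pow_ne_zero m hs
  rw [sub_div, mul_div_cancel_right₀ _ hs, sub_add_cancel]

/-! ### Integration by parts for poles along a loop -/

/-- Smooth functions of period `T`, the class of all coefficients along a closed curve. -/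
structure SmoothPeriodic {E : Type*} [NormedAddCommGroup E] [NormedSpace ℝ E] (T : ℝ)
    (f : ℝ → E) : Prop where
  contDiff : ContDiff ℝ ∞ f
  periodic : Function.Periodic f T

namespace SmoothPeriodic

variable {E F : Type*} [NormedAddCommGroup E] [NormedSpace ℝ E] [NormedAddCommGroup F]
  [NormedSpace ℝ F] {T : ℝ} {f : ℝ → E}

lemma deriv (hf : SmoothPeriodic T f) : SmoothPeriodic T (deriv f) where
  contDiff := (contDiff_infty_iff_deriv.mp hf.contDiff).2
  periodic s := by rw [← deriv_comp_add_const, funext hf.periodic]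

lemma hasDerivAt (hf : SmoothPeriodic T f) (s : ℝ) : HasDerivAt f (_root_.deriv f s) s :=
  ((contDiff_infty_iff_deriv.mp hf.contDiff).1 s).hasDerivAt

lemma continuous (hf : SmoothPeriodic T f) : Continuous f := hf.contDiff.continuous

lemma clm_comp (hf : SmoothPeriodic T f) (A : E →L[ℝ] F) : SmoothPeriodic T fun s => A (f s) where
  contDiff := A.contDiff.comp hf.contDiff
  periodic s := congrArg A (hf.periodic s)

lemma star {f : ℝ → ℂ} (hf : SmoothPeriodic T f) : SmoothPeriodic T fun s => conj (f s) :=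
  hf.clm_comp (Complex.conjCLE : ℂ →L[ℝ] ℂ)

lemma comp_const_add (hf : SmoothPeriodic T f) (t : ℝ) : SmoothPeriodic T fun s => f (t + s) where
  contDiff := hf.contDiff.comp (contDiff_const.add contDiff_id)
  periodic s := by simpa only [add_assoc] using hf.periodic (t + s)

lemma mul {f g : ℝ → ℝ} (hf : SmoothPeriodic T f) (hg : SmoothPeriodic T g) :
    SmoothPeriodic T fun s => f s * g s where
  contDiff := hf.contDiff.mul hg.contDiff
  periodic s := by simp only [hf.periodic s, hg.periodic s]

lemma const_mul_ofReal {f : ℝ → ℝ} (hf : SmoothPeriodic T f) (c : ℂ) :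
    SmoothPeriodic T fun s => c * f s :=
  hf.clm_comp (c • Complex.ofRealCLM)

lemma hasDerivAt_const_mul_ofReal {f : ℝ → ℝ} (hf : SmoothPeriodic T f) (c : ℂ) (s : ℝ) :
    HasDerivAt (fun r => c * f r) (c * (_root_.deriv f s : ℝ)) s :=
  (hf.hasDerivAt s).ofReal_comp.const_mul c

end SmoothPeriodic

/-- The function `(a z̄ + b) / z ^ k` with coefficients `q = (a, b)`. -/
def pole (q : ℂ × ℂ) (k : ℕ) (z : ℂ) : ℂ := (q.1 * conj z + q.2) / z ^ k

lemma pole_sub_smul (q r : ℂ × ℂ) (c : ℂ) (k : ℕ) (z : ℂ) :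
    pole (q - c • r) k z = pole q k z - c * pole r k z := by
  simp only [pole, Prod.fst_sub, Prod.snd_sub, Prod.smul_fst, Prod.smul_snd, smul_eq_mul]
  ring

lemma hasDerivAt_pole {q : ℝ → ℂ × ℂ} {z : ℝ → ℂ} {q' : ℂ × ℂ} {z' : ℂ} {s : ℝ}
    (hq : HasDerivAt q q' s) (hz : HasDerivAt z z' s) (k : ℕ) (hz0 : z s ≠ 0) :
    HasDerivAt (fun r => pole (q r) k (z r))
      (pole (q'.1, q'.2 + (q s).1 * conj z') k (z s) - k * z' * pole (q s) (k + 1) (z s)) s := by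
  have hfst : HasDerivAt (fun r => (q r).1) q'.1 s :=
    (ContinuousLinearMap.fst ℝ ℂ ℂ).hasFDerivAt.comp_hasDerivAt s hq
  have hsnd : HasDerivAt (fun r => (q r).2) q'.2 s :=
    (ContinuousLinearMap.snd ℝ ℂ ℂ).hasFDerivAt.comp_hasDerivAt s hq
  have hnum : HasDerivAt (fun r => (q r).1 * conj (z r) + (q r).2)
      (q'.1 * conj (z s) + (q s).1 * conj z' + q'.2) s := (hfst.mul hz.star).add hsnd
  refine (hnum.div (hz.fun_pow k) (pow_ne_zero k hz0)).congr_deriv ?_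
  rcases k with _ | k <;> simp only [pole] <;> field_simp <;> push_cast <;> ring

/-- A simple closed curve of length `2 * halfPeriod`, parametrized by arc length, that passes
through the origin at parameter `0` in the direction of the positive real axis. -/
structure TangentLoop where
  curve : ℝ → ℂ
  halfPeriod : ℝ
  halfPeriod_pos : 0 < halfPeriod
  smoothPeriodic : SmoothPeriodic (2 * halfPeriod) curve
  norm_deriv (s : ℝ) : ‖deriv curve s‖ = 1
  curve_zero : curve 0 = 0
  deriv_zero : deriv curve 0 = 1
  curve_ne_zero : ∀ s ∈ Set.Icc (-halfPeriod) halfPeriod, s ≠ 0 → curve s ≠ 0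

namespace TangentLoop

variable (D : TangentLoop)

/-- The unit tangent of the loop. -/
def tangent (s : ℝ) : ℂ := deriv D.curve s

/-- The vector from the point of the loop at parameter `s` to `-i h`, the point at signed
distance `h` from the origin on the normal there. -/
def offset (h s : ℝ) : ℂ := -Complex.I * h - D.curve s

/-- The class of coefficients of poles along the loop. -/
abbrev IsCoeff {E : Type*} [NormedAddCommGroup E] [NormedSpace ℝ E] (q : ℝ → E) : Prop :=
  SmoothPeriodic (2 * D.halfPeriod) q

/-- The coefficient produced by integrating by parts: up to a total derivative, a pole of
order `k + 1` with coefficient `q` is `-1 / k` times the pole of order `k` with coefficient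
`D.descend q`. -/
def descend (q : ℝ → ℂ × ℂ) (s : ℝ) : ℂ × ℂ :=
  let d := deriv (fun r => conj (D.tangent r) • q r) s
  (d.1, d.2 - conj (D.tangent s) ^ 2 * (q s).1)

/-- The sum of poles of orders `k, k + 1, …` with the listed coefficients. -/
def kernel : ℕ → List (ℝ → ℂ × ℂ) → ℝ → ℝ → ℂ
  | _, [], _, _ => 0
  | k, q :: qs, h, s => pole (q s) k (D.offset h s) + kernel (k + 1) qs h s

/-- The coefficient of the pole of order `k` to which `D.kernel k qs` reduces after all higher
poles have been integrated by parts. -/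
def residual : ℕ → List (ℝ → ℂ × ℂ) → ℝ → ℂ × ℂ
  | _, [], _ => 0
  | k, q :: qs, s => q s - (k : ℂ)⁻¹ • D.descend (residual (k + 1) qs) s

/-- The boundary term of the integrations by parts that lead to `D.residual k qs`. -/
def primitive : ℕ → List (ℝ → ℂ × ℂ) → ℝ → ℝ → ℂ
  | _, [], _, _ => 0
  | k, _ :: qs, h, s =>
    (k : ℂ)⁻¹ * pole (conj (D.tangent s) • D.residual (k + 1) qs s) k (D.offset h s)
      + primitive (k + 1) qs h s

lemma isCoeff_tangent : D.IsCoeff D.tangent := D.smoothPeriodic.deriv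

lemma tangent_mul_conj (s : ℝ) : D.tangent s * conj (D.tangent s) = 1 :=
  mul_conj_eq_one_of_norm_eq_one (D.norm_deriv s)

lemma hasDerivAt_curve (s : ℝ) : HasDerivAt D.curve (D.tangent s) s :=
  D.smoothPeriodic.hasDerivAt s

lemma offset_zero (s : ℝ) : D.offset 0 s = -D.curve s := by simp [offset]

lemma hasDerivAt_offset (h s : ℝ) : HasDerivAt (D.offset h) (-D.tangent s) s :=
  (D.hasDerivAt_curve s).const_sub _

lemma periodic_offset (h : ℝ) : Function.Periodic (D.offset h) (2 * D.halfPeriod) := fun s =>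
  congrArg (-Complex.I * h - ·) (D.smoothPeriodic.periodic s)

variable {D} {q : ℝ → ℂ × ℂ} {qs : List (ℝ → ℂ × ℂ)}

namespace IsCoeff

lemma conj_tangent_smul (hq : D.IsCoeff q) : D.IsCoeff fun s => conj (D.tangent s) • q s where
  contDiff := D.isCoeff_tangent.star.contDiff.smul hq.contDiff
  periodic s := by simp only [D.isCoeff_tangent.periodic s, hq.periodic s]

lemma descend (hq : D.IsCoeff q) : D.IsCoeff (D.descend q) where
  contDiff := by
    have hd := hq.conj_tangent_smul.deriv.contDiff
    have hu := D.isCoeff_tangent.star.contDiff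
    exact hd.fst.prodMk (hd.snd.sub ((hu.pow 2).mul hq.contDiff.fst))
  periodic s := by
    simp only [TangentLoop.descend, hq.conj_tangent_smul.deriv.periodic s,
      D.isCoeff_tangent.periodic s, hq.periodic s]

lemma residual (hqs : ∀ q ∈ qs, D.IsCoeff q) (k : ℕ) : D.IsCoeff (D.residual k qs) := by
  induction qs generalizing k with
  | nil => exact ⟨contDiff_const, fun _ => rfl⟩
  | cons q qs ih =>
    obtain ⟨hq, hqs⟩ := List.forall_mem_cons.mp hqs
    have hd := (ih hqs (k + 1)).descend
    exact ⟨hq.contDiff.sub (hd.contDiff.const_smul _), fun s => by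
      simp only [TangentLoop.residual, hq.periodic s, hd.periodic s]⟩

end IsCoeff

lemma hasDerivAt_pole_offset (hq : D.IsCoeff q) (k : ℕ) {h s : ℝ} (hz : D.offset h s ≠ 0) :
    HasDerivAt (fun r => pole (conj (D.tangent r) • q r) k (D.offset h r))
      (k * pole (q s) (k + 1) (D.offset h s) + pole (D.descend q s) k (D.offset h s)) s := by
  refine (hasDerivAt_pole (hq.conj_tangent_smul.hasDerivAt s) (D.hasDerivAt_offset h s) k
    hz).congr_deriv ?_
  have hu := D.tangent_mul_conj s
  simp only [pole, descend, Prod.smul_fst, Prod.smul_snd, smul_eq_mul, map_neg]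
  linear_combination
    k * ((q s).1 * conj (D.offset h s) + (q s).2) / D.offset h s ^ (k + 1) * hu

lemma hasDerivAt_primitive (hqs : ∀ q ∈ qs, D.IsCoeff q) {k : ℕ} (hk : k ≠ 0) {h s : ℝ}
    (hz : D.offset h s ≠ 0) : HasDerivAt (D.primitive k qs h)
      (D.kernel k qs h s - pole (D.residual k qs s) k (D.offset h s)) s := by
  induction qs generalizing k with
  | nil => simpa [primitive, kernel, residual, pole] using hasDerivAt_const s (0 : ℂ)
  | cons q qs ih =>
    obtain ⟨-, hqs⟩ := List.forall_mem_cons.mp hqs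
    refine (((hasDerivAt_pole_offset (IsCoeff.residual hqs (k + 1)) k hz).const_mul
      (k : ℂ)⁻¹).add (ih hqs k.succ_ne_zero)).congr_deriv ?_
    simp only [kernel, residual, pole_sub_smul]
    have hk : (k : ℂ) ≠ 0 := Nat.cast_ne_zero.mpr hk
    field_simp
    ring

lemma continuousAt_kernel (hqs : ∀ q ∈ qs, D.IsCoeff q) (k : ℕ) {h s : ℝ}
    (hz : D.offset h s ≠ 0) : ContinuousAt (D.kernel k qs h) s := by
  induction qs generalizing k with
  | nil => exact continuousAt_const
  | cons q qs ih =>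
    obtain ⟨hq, hqs⟩ := List.forall_mem_cons.mp hqs
    exact (hasDerivAt_pole (hq.hasDerivAt s) (D.hasDerivAt_offset h s) k hz).continuousAt.add
      (ih hqs (k + 1))

lemma periodic_primitive (hqs : ∀ q ∈ qs, D.IsCoeff q) (k : ℕ) (h : ℝ) :
    Function.Periodic (D.primitive k qs h) (2 * D.halfPeriod) := by
  induction qs generalizing k with
  | nil => exact fun _ => rfl
  | cons q qs ih =>
    intro s
    obtain ⟨-, hqs⟩ := List.forall_mem_cons.mp hqs
    simp only [primitive, ih hqs (k + 1) s, D.isCoeff_tangent.periodic s,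
      D.periodic_offset h s, (IsCoeff.residual hqs (k + 1)).periodic s]

end TangentLoop

/-! ### The jump of a sum of poles -/

/-- Functions along a curve `g` that become smooth when multiplied by a power of `‖g‖²`: they have
at most a pole of finite order where the curve meets the origin. -/
def HasFinitePole (g F : ℝ → ℂ) : Prop :=
  ∃ (N : ℕ) (f : ℝ → ℂ), ContDiff ℝ ∞ f ∧ ∀ s, g s ≠ 0 → F s * Complex.normSq (g s) ^ N = f s

namespace HasFinitePole

variable {g F G : ℝ → ℂ}

lemma contDiff_normSq (hg : ContDiff ℝ ∞ g) :
    ContDiff ℝ ∞ fun s => (Complex.normSq (g s) : ℂ) := by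
  simp only [← Complex.mul_conj]
  exact hg.mul (Complex.conjCLE.contDiff.comp hg)

lemma add (hg : ContDiff ℝ ∞ g) (hF : HasFinitePole g F) (hG : HasFinitePole g G) :
    HasFinitePole g fun s => F s + G s := by
  obtain ⟨N, f, hf, hfF⟩ := hF
  obtain ⟨M, f', hf', hfG⟩ := hG
  refine ⟨N + M, fun s => f s * Complex.normSq (g s) ^ M + f' s * Complex.normSq (g s) ^ N,
    (hf.mul ((contDiff_normSq hg).pow M)).add (hf'.mul ((contDiff_normSq hg).pow N)),
    fun s hs => ?_⟩
  simp only [← hfF s hs, ← hfG s hs]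
  ring

lemma const_mul (c : ℂ) (hF : HasFinitePole g F) : HasFinitePole g fun s => c * F s := by
  obtain ⟨N, f, hf, hfF⟩ := hF
  exact ⟨N, fun s => c * f s, contDiff_const.mul hf, fun s hs => by rw [mul_assoc, hfF s hs]⟩

lemma of_pole {q : ℝ → ℂ × ℂ} (hq : ContDiff ℝ ∞ q) (hg : ContDiff ℝ ∞ g) (k : ℕ) :
    HasFinitePole g fun s => pole (q s) k (g s) := by
  have hconj : ContDiff ℝ ∞ fun s => conj (g s) := Complex.conjCLE.contDiff.comp hg
  refine ⟨k, fun s => ((q s).1 * conj (g s) + (q s).2) * conj (g s) ^ k,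
    ((hq.fst.mul hconj).add hq.snd).mul (hconj.pow k), fun s hs => ?_⟩
  simp only [_root_.pole, ← Complex.mul_conj]
  field_simp
  ring

lemma tendsto_normSq_div_sq {v : ℂ} (hg : HasDerivAt g v 0) (hg0 : g 0 = 0) :
    Tendsto (fun s => Complex.normSq (g s) / s ^ 2) (𝓝[≠] 0) (𝓝 (Complex.normSq v)) := by
  refine ((Complex.continuous_normSq.tendsto v).comp hg.tendsto_slope).congr fun s => ?_
  simp [slope_def_module, hg0, Complex.normSq_mul, div_eq_inv_mul, ← sq]

lemma exists_tendsto_re (hF : HasFinitePole g F) (hg0 : g 0 = 0) {v : ℂ} (hv : v ≠ 0)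
    (hg : HasDerivAt g v 0) (hO : (fun s => (F s).re) =O[𝓝[≠] 0] (1 : ℝ → ℝ)) :
    ∃ y, Tendsto (fun s => (F s).re) (𝓝[≠] 0) (𝓝 y) := by
  obtain ⟨N, f, hf, hfF⟩ := hF
  have hratio := (tendsto_normSq_div_sq hg hg0).pow N
  have hquot : ∀ᶠ s in 𝓝[≠] 0,
      (F s).re * (Complex.normSq (g s) / s ^ 2) ^ N = (f s).re / s ^ (2 * N) := by
    filter_upwards [(show ∀ᶠ s in 𝓝[≠] 0, g s ≠ 0 by simpa [hg0] using hg.eventually_ne hv)]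
      with s hs
    rw [← hfF s hs, ← Complex.ofReal_pow, Complex.re_mul_ofReal, div_pow, ← pow_mul, mul_div_assoc]
  have hfO : (fun s => (f s).re) =O[𝓝[≠] 0] fun s : ℝ => s ^ (2 * N) := by
    have hdivO := ((hO.mul (hratio.isBigO_one ℝ)).congr' hquot .rfl).mul
      (Asymptotics.isBigO_refl (fun s : ℝ => s ^ (2 * N)) (𝓝[≠] 0))
    refine hdivO.congr' ?_ (by simp)
    filter_upwards [self_mem_nhdsWithin] with s hs
    exact div_mul_cancel₀ _ (pow_ne_zero _ hs)
  have hfre : ContDiff ℝ (2 * N : ℕ) fun s => (f s).re :=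
    Complex.reCLM.contDiff.comp (hf.of_le (WithTop.coe_le_coe.mpr le_top))
  obtain ⟨c, hc⟩ := exists_tendsto_div_pow_of_isBigO hfre hfO
  have hvN : Complex.normSq v ^ N ≠ 0 := pow_ne_zero N (Complex.normSq_eq_zero.not.mpr hv)
  refine ⟨c / Complex.normSq v ^ N, (hc.div hratio hvN).congr' ?_⟩
  filter_upwards [hquot, hratio.eventually_ne hvN] with s hs hne
  rw [Pi.div_apply, ← hs, mul_div_cancel_right₀ _ hne]

end HasFinitePole

lemma norm_ofReal_div_le {s C : ℝ} {z : ℂ} (hz : z ≠ 0) (h : |s| ≤ C * ‖z‖) : ‖s / z‖ ≤ C := by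
  rw [norm_div, Complex.norm_real, Real.norm_eq_abs]
  exact (div_le_iff₀ (norm_pos_iff.mpr hz)).mpr h

lemma norm_pole_one_sub_div_le {q : ℂ × ℂ} {b z z₀ : ℂ} {s A B C G : ℝ} (hs : s ≠ 0)
    (hA : ‖q.1‖ ≤ A) (hB : ‖(q.2 - b) / s ^ 1‖ ≤ B) (hG : ‖(z₀ - z) / s ^ 2‖ ≤ G)
    (hz : |s| ≤ C * ‖z‖) (hz₀ : |s| ≤ ‖z₀‖) :
    ‖pole q 1 z - b / z₀‖ ≤ A + B * C + ‖b‖ * (G * C) := by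
  have hs' : (s : ℂ) ≠ 0 := Complex.ofReal_ne_zero.mpr hs
  have hz0 : z ≠ 0 := by
    rintro rfl
    exact hs (abs_nonpos_iff.mp (by simpa using hz))
  have hz₀0 : z₀ ≠ 0 := norm_pos_iff.mp ((abs_pos.mpr hs).trans_le hz₀)
  have hsplit : pole q 1 z - b / z₀ = q.1 * (conj z / z) + (q.2 - b) / s ^ 1 * (s / z)
      + b * ((z₀ - z) / s ^ 2 * (s / z) * (s / z₀)) := by
    rw [pole]
    field_simp
    ring
  have hconj : ‖conj z / z‖ = 1 := by simp [hz0]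
  have hsz := norm_ofReal_div_le hz0 hz
  have hsz₀ : ‖s / z₀‖ ≤ 1 := norm_ofReal_div_le hz₀0 (by rwa [one_mul])
  have hBC := norm_mul_le_of_le hB hsz
  have hGC := norm_mul_le_of_le (norm_mul_le_of_le hG hsz) hsz₀
  rw [hsplit]
  refine norm_add₃_le.trans (add_le_add_three ?_ hBC ?_)
  · rwa [norm_mul, hconj, mul_one]
  · rw [norm_mul]
    exact mul_le_mul_of_nonneg_left (by rwa [mul_one] at hGC) (norm_nonneg _)

namespace TangentLoop

variable (D : TangentLoop) {q : ℝ → ℂ × ℂ} {qs : List (ℝ → ℂ × ℂ)}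

lemma isBigO_tangent_sub_one : (fun s => D.tangent s - 1) =O[𝓝 0] fun s : ℝ => s := by
  simpa [tangent, D.deriv_zero] using (D.isCoeff_tangent.hasDerivAt 0).isBigO_sub

lemma isBigO_curve_sub : (fun s => D.curve s - s) =O[𝓝 0] fun s : ℝ => s ^ 2 :=
  isBigO_pow_succ_of_hasDerivAt
    (fun s => (D.hasDerivAt_curve s).sub (hasDerivAt_id s).ofReal_comp)
    (by simp [D.curve_zero]) (by simpa using D.isBigO_tangent_sub_one)

lemma isBigO_offset : (fun p : ℝ × ℝ => p.2) =O[𝓝 (0, 0)] fun p => D.offset p.1 p.2 := by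
  have hcurve : HasDerivAt (fun s => (D.curve s).re) 1 0 := by
    simpa [tangent, D.deriv_zero] using hasDerivAt_re (D.hasDerivAt_curve 0)
  have hre : (fun s => s) =O[𝓝 0] fun s => (D.curve s).re := by
    simpa [D.curve_zero, Function.comp_def] using (hcurve.isTheta_sub one_ne_zero).2
  have hle : (fun p : ℝ × ℝ => (D.curve p.2).re) =O[𝓝 (0, 0)] fun p => D.offset p.1 p.2 :=
    Asymptotics.isBigO_of_le _ fun p => by
      simpa [offset] using Complex.abs_re_le_norm (D.offset p.1 p.2)
  exact (hre.comp_tendsto (continuous_snd.tendsto ((0 : ℝ), (0 : ℝ)))).trans hle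

lemma exists_eventually_abs_le_mul_norm_offset : ∃ C, ∀ᶠ h in 𝓝 0,
    ∀ s ∈ Set.Icc (-D.halfPeriod) D.halfPeriod, |s| ≤ C * ‖D.offset h s‖ := by
  have hO : (fun p : ℝ × ℝ => p.2) =O[𝓝ˢ ({0} ×ˢ Set.Icc (-D.halfPeriod) D.halfPeriod)]
      fun p => D.offset p.1 p.2 := by
    refine isBigO_nhdsSet_of_isCompact (isCompact_singleton.prod isCompact_Icc) ?_
    rintro ⟨h, s⟩ ⟨rfl : h = 0, hs⟩
    rcases eq_or_ne s 0 with rfl | hs0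
    · exact D.isBigO_offset
    · refine isBigO_of_continuousAt_of_ne_zero continuous_snd.continuousAt ?_ ?_
      · have := D.smoothPeriodic.continuous
        unfold offset
        fun_prop
      · simpa [offset_zero] using D.curve_ne_zero s hs hs0
  rw [isCompact_singleton.nhdsSet_prod_eq isCompact_Icc, nhdsSet_singleton] at hO
  obtain ⟨C, hC⟩ := hO.bound
  obtain ⟨p, hp, r, hr, hpr⟩ := eventually_prod_iff.mp hC
  exact ⟨C, hp.mono fun h hh s hs => hpr hh (hr.self_of_nhdsSet s hs)⟩

lemma exists_eventually_norm_pole_sub_le (hq : D.IsCoeff q) : ∃ M, ∀ᶠ h : ℝ in 𝓝 0,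
    ∀ s ∈ Set.Icc (-D.halfPeriod) D.halfPeriod, s ≠ 0 →
      ‖pole (q s) 1 (D.offset h s) - (q 0).2 / (-Complex.I * h - s)‖ ≤ M := by
  obtain ⟨A, hA⟩ := isCompact_Icc.exists_bound_of_continuousOn
    (s := Set.Icc (-D.halfPeriod) D.halfPeriod) hq.continuous.fst.continuousOn
  have hsnd : (fun s => (q s).2 - (q 0).2) =O[𝓝 0] fun s : ℝ => s ^ 1 := by
    simpa using ((hq.clm_comp (ContinuousLinearMap.snd ℝ ℂ ℂ)).hasDerivAt 0).isBigO_sub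
  obtain ⟨B, hB⟩ := exists_forall_norm_div_pow_le (hq.continuous.snd.sub continuous_const) hsnd
    (-D.halfPeriod) D.halfPeriod
  obtain ⟨G, hG⟩ := exists_forall_norm_div_pow_le
    (D.smoothPeriodic.continuous.sub Complex.continuous_ofReal) D.isBigO_curve_sub
    (-D.halfPeriod) D.halfPeriod
  obtain ⟨C, hC⟩ := D.exists_eventually_abs_le_mul_norm_offset
  refine ⟨A + B * C + ‖(q 0).2‖ * (G * C), hC.mono fun h hh s hs hs0 => ?_⟩
  have hcurve : -Complex.I * h - s - D.offset h s = D.curve s - s := by rw [offset]; ring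
  refine norm_pole_one_sub_div_le hs0 (hA s hs) (hB s hs) (hcurve ▸ hG s hs) (hh s hs) ?_
  simpa using Complex.abs_re_le_norm (-Complex.I * h - s)

lemma re_neg_I_mul_div (β h s : ℝ) :
    ((-Complex.I * β) / (-Complex.I * h - s)).re = β * (h / (s ^ 2 + h ^ 2)) := by
  simp only [Complex.div_re, Complex.normSq_apply, Complex.mul_re, Complex.mul_im, Complex.neg_re,
    Complex.neg_im, Complex.sub_re, Complex.sub_im, Complex.I_re, Complex.I_im, Complex.ofReal_re,
    Complex.ofReal_im]
  ring

lemma exists_eventually_abs_re_pole_sub_le (hq : D.IsCoeff q) {β : ℝ}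
    (hβ : (q 0).2 = -Complex.I * β) : ∃ M, ∀ᶠ h : ℝ in 𝓝 0,
    ∀ s ∈ Set.Icc (-D.halfPeriod) D.halfPeriod, s ≠ 0 →
      |(pole (q s) 1 (D.offset h s)).re - β * (h / (s ^ 2 + h ^ 2))| ≤ M := by
  obtain ⟨M, hM⟩ := D.exists_eventually_norm_pole_sub_le hq
  refine ⟨M, hM.mono fun h hh s hs hs0 => ?_⟩
  rw [← re_neg_I_mul_div, ← hβ, ← Complex.sub_re]
  exact (Complex.abs_re_le_norm _).trans (hh s hs hs0)

lemma eventually_offset_ne_zero : ∀ᶠ h : ℝ in 𝓝 0,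
    ∀ s ∈ Set.Icc (-D.halfPeriod) D.halfPeriod, s ≠ 0 ∨ h ≠ 0 → D.offset h s ≠ 0 := by
  obtain ⟨C, hC⟩ := D.exists_eventually_abs_le_mul_norm_offset
  refine hC.mono fun h hh s hs hne hz => ?_
  have hs0 : s = 0 := abs_nonpos_iff.mp (by simpa [hz] using hh s hs)
  subst hs0
  simp_all [offset, D.curve_zero]

variable {D}

lemma hasFinitePole_primitive (hqs : ∀ q ∈ qs, D.IsCoeff q) (k : ℕ) :
    HasFinitePole (D.offset 0) (D.primitive k qs 0) := by
  have hoff : ContDiff ℝ ∞ (D.offset 0) := contDiff_const.sub D.smoothPeriodic.contDiff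
  induction qs generalizing k with
  | nil => exact ⟨0, 0, contDiff_const, fun s _ => by simp [primitive]⟩
  | cons q qs ih =>
    obtain ⟨-, hqs⟩ := List.forall_mem_cons.mp hqs
    exact ((HasFinitePole.of_pole (IsCoeff.residual hqs (k + 1)).conj_tangent_smul.contDiff
      hoff k).const_mul _).add hoff (ih hqs (k + 1))

lemma continuousAt_pole_residual (hqs : ∀ q ∈ qs, D.IsCoeff q) (k : ℕ) {h s : ℝ}
    (hz : D.offset h s ≠ 0) :
    ContinuousAt (fun r => pole (D.residual k qs r) k (D.offset h r)) s :=
  (hasDerivAt_pole ((IsCoeff.residual hqs k).hasDerivAt s) (D.hasDerivAt_offset h s) k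
    hz).continuousAt

lemma intervalIntegrable_re_of_continuousAt {f : ℝ → ℂ}
    (hf : ∀ s ∈ Set.Icc (-D.halfPeriod) D.halfPeriod, s ≠ 0 → ContinuousAt f s)
    (hO : (fun s => (f s).re) =O[𝓝[≠] 0] (1 : ℝ → ℝ)) :
    IntervalIntegrable (fun s => (f s).re) volume (-D.halfPeriod) D.halfPeriod :=
  intervalIntegrable_of_isBigO_one_punctured (neg_le_self D.halfPeriod_pos.le)
    (fun s hs hs0 => Complex.continuous_re.continuousAt.comp (hf s hs hs0)) hO

lemma integral_re_kernel_eq (hqs : ∀ q ∈ qs, D.IsCoeff q) {h y : ℝ}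
    (hz : ∀ s ∈ Set.Icc (-D.halfPeriod) D.halfPeriod, s ≠ 0 → D.offset h s ≠ 0)
    (hker : (fun s => (D.kernel 1 qs h s).re) =O[𝓝[≠] 0] (1 : ℝ → ℝ))
    (hres : (fun s => (pole (D.residual 1 qs s) 1 (D.offset h s)).re) =O[𝓝[≠] 0] (1 : ℝ → ℝ))
    (hprim : Tendsto (fun s => (D.primitive 1 qs h s).re) (𝓝[≠] 0) (𝓝 y)) :
    ∫ s in (-D.halfPeriod)..D.halfPeriod, (D.kernel 1 qs h s).re =
      ∫ s in (-D.halfPeriod)..D.halfPeriod, (pole (D.residual 1 qs s) 1 (D.offset h s)).re := by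
  have hkerI := intervalIntegrable_re_of_continuousAt
    (fun s hs hs0 => continuousAt_kernel hqs 1 (hz s hs hs0)) hker
  have hresI := intervalIntegrable_re_of_continuousAt
    (fun s hs hs0 => continuousAt_pole_residual hqs 1 (hz s hs hs0)) hres
  have hperiod : D.primitive 1 qs h D.halfPeriod = D.primitive 1 qs h (-D.halfPeriod) := by
    rw [← periodic_primitive hqs 1 h (-D.halfPeriod)]
    ring_nf
  rw [← sub_eq_zero, ← intervalIntegral.integral_sub hkerI hresI,
    integral_eq_sub_of_hasDerivAt_punctured (neg_lt_zero.mpr D.halfPeriod_pos) D.halfPeriod_pos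
      (fun s hs hs0 => ?_) (hkerI.sub hresI) hprim, hperiod, sub_self]
  simpa using hasDerivAt_re (hasDerivAt_primitive hqs one_ne_zero (hz s hs hs0))

lemma integral_re_kernel_eq_of_ne_zero (hqs : ∀ q ∈ qs, D.IsCoeff q) {h : ℝ}
    (hz : ∀ s ∈ Set.Icc (-D.halfPeriod) D.halfPeriod, D.offset h s ≠ 0) :
    ∫ s in (-D.halfPeriod)..D.halfPeriod, (D.kernel 1 qs h s).re =
      ∫ s in (-D.halfPeriod)..D.halfPeriod, (pole (D.residual 1 qs s) 1 (D.offset h s)).re := by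
  have hz0 := hz 0 ⟨neg_nonpos.mpr D.halfPeriod_pos.le, D.halfPeriod_pos.le⟩
  have hlim {f : ℝ → ℂ} (hf : ContinuousAt f 0) :
      Tendsto (fun s => (f s).re) (𝓝[≠] 0) (𝓝 (f 0).re) :=
    ((Complex.continuous_re.tendsto _).comp hf).mono_left nhdsWithin_le_nhds
  exact integral_re_kernel_eq hqs (fun s hs _ => hz s hs)
    ((hlim (continuousAt_kernel hqs 1 hz0)).isBigO_one ℝ)
    ((hlim (continuousAt_pole_residual hqs 1 hz0)).isBigO_one ℝ)
    (hlim (hasDerivAt_primitive hqs one_ne_zero hz0).continuousAt)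

lemma isBigO_re_pole_offset_zero {q : ℝ → ℂ × ℂ} (hq : D.IsCoeff q) {β : ℝ}
    (hβ : (q 0).2 = -Complex.I * β) :
    (fun s => (pole (q s) 1 (D.offset 0 s)).re) =O[𝓝[≠] 0] (1 : ℝ → ℝ) := by
  obtain ⟨M, hM⟩ := D.exists_eventually_abs_re_pole_sub_le hq hβ
  have hIcc : Set.Icc (-D.halfPeriod) D.halfPeriod ∈ 𝓝[≠] (0 : ℝ) :=
    nhdsWithin_le_nhds (Icc_mem_nhds (neg_lt_zero.mpr D.halfPeriod_pos) D.halfPeriod_pos)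
  refine .of_bound M ?_
  filter_upwards [hIcc, self_mem_nhdsWithin] with s hs hs0
  simpa using hM.self_of_nhds s hs hs0

lemma integral_re_kernel_zero_eq (hqs : ∀ q ∈ qs, D.IsCoeff q) {β : ℝ}
    (hβ : (D.residual 1 qs 0).2 = -Complex.I * β)
    (hker : (fun s => (D.kernel 1 qs 0 s).re) =O[𝓝[≠] 0] (1 : ℝ → ℝ)) :
    ∫ s in (-D.halfPeriod)..D.halfPeriod, (D.kernel 1 qs 0 s).re =
      ∫ s in (-D.halfPeriod)..D.halfPeriod, (pole (D.residual 1 qs s) 1 (D.offset 0 s)).re := by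
  have hz (s) (hs : s ∈ Set.Icc (-D.halfPeriod) D.halfPeriod) (hs0 : s ≠ 0) :
      D.offset 0 s ≠ 0 := D.eventually_offset_ne_zero.self_of_nhds s hs (.inl hs0)
  have hIcc : Set.Icc (-D.halfPeriod) D.halfPeriod ∈ 𝓝[≠] (0 : ℝ) :=
    nhdsWithin_le_nhds (Icc_mem_nhds (neg_lt_zero.mpr D.halfPeriod_pos) D.halfPeriod_pos)
  have hres := isBigO_re_pole_offset_zero (IsCoeff.residual hqs 1) hβ
  have hprimO : (fun s => (D.primitive 1 qs 0 s).re) =O[𝓝[≠] 0] (1 : ℝ → ℝ) := by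
    refine isBigO_one_of_hasDerivAt_punctured ?_ (hker.sub hres)
    filter_upwards [hIcc, self_mem_nhdsWithin] with s hs hs0
    simpa using hasDerivAt_re (hasDerivAt_primitive hqs one_ne_zero (hz s hs hs0))
  have htangent : D.tangent 0 = 1 := D.deriv_zero
  obtain ⟨y, hy⟩ := (hasFinitePole_primitive hqs 1).exists_tendsto_re
    (by simp [offset, D.curve_zero]) (by simp [htangent]) (D.hasDerivAt_offset 0 0) hprimO
  exact integral_re_kernel_eq hqs hz hker hres hy

lemma tendsto_integral_re_pole_sub {q : ℝ → ℂ × ℂ} (hq : D.IsCoeff q) {β : ℝ}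
    (hβ : (q 0).2 = -Complex.I * β) :
    Tendsto (fun h : ℝ => ∫ s in (-D.halfPeriod)..D.halfPeriod,
        ((pole (q s) 1 (D.offset h s)).re - β * (h / (s ^ 2 + h ^ 2)))) (𝓝[≠] 0)
      (𝓝 (∫ s in (-D.halfPeriod)..D.halfPeriod, (pole (q s) 1 (D.offset 0 s)).re)) := by
  obtain ⟨M, hM⟩ := D.exists_eventually_abs_re_pole_sub_le hq hβ
  have hne : ∀ᵐ s : ℝ, s ≠ 0 := Measure.ae_ne volume 0
  have hIoc {s : ℝ} (hs : s ∈ Set.uIoc (-D.halfPeriod) D.halfPeriod) :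
      s ∈ Set.Icc (-D.halfPeriod) D.halfPeriod :=
    Set.Ioc_subset_Icc_self (Set.uIoc_of_le (neg_le_self D.halfPeriod_pos.le) ▸ hs)
  refine intervalIntegral.tendsto_integral_filter_of_dominated_convergence (fun _ => M) ?_ ?_
    intervalIntegrable_const ?_
  · filter_upwards [nhdsWithin_le_nhds D.eventually_offset_ne_zero, self_mem_nhdsWithin]
      with h hz hh
    refine ContinuousOn.aestronglyMeasurable (fun s hs => ContinuousAt.continuousWithinAt ?_)
      measurableSet_uIoc
    have hpole := Complex.continuous_re.continuousAt.comp (hasDerivAt_pole (hq.hasDerivAt s)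
      (D.hasDerivAt_offset h s) 1 (hz s (hIoc hs) (.inr hh))).continuousAt
    have hden : s ^ 2 + h ^ 2 ≠ 0 := by have : h ≠ 0 := hh; positivity
    exact hpole.sub (by fun_prop (disch := exact hden))
  · filter_upwards [nhdsWithin_le_nhds hM] with h hh
    filter_upwards [hne] with s hs0 hs using hh s (hIoc hs) hs0
  · filter_upwards [hne] with s hs0 hs
    have hz : D.offset 0 s ≠ 0 := D.eventually_offset_ne_zero.self_of_nhds s (hIoc hs) (.inl hs0)
    have hcont : ContinuousAt (fun h : ℝ =>
        (pole (q s) 1 (D.offset h s)).re - β * (h / (s ^ 2 + h ^ 2))) 0 := by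
      have hpole : ContinuousAt (fun h : ℝ => pole (q s) 1 (D.offset h s)) 0 := by
        have hoff : ContinuousAt (fun h : ℝ => D.offset h s) 0 := by unfold offset; fun_prop
        exact ((continuousAt_const.mul hoff.star).add continuousAt_const).div (hoff.pow 1)
          (pow_ne_zero 1 hz)
      have hden : s ^ 2 + (0 : ℝ) ^ 2 ≠ 0 := by positivity
      exact (Complex.continuous_re.continuousAt.comp hpole).sub
        (by fun_prop (disch := exact hden))
    simpa using hcont.tendsto.mono_left nhdsWithin_le_nhds

lemma tendsto_integral_re_kernel_sub (hqs : ∀ q ∈ qs, D.IsCoeff q) {β : ℝ}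
    (hβ : (D.residual 1 qs 0).2 = -Complex.I * β)
    (hker : (fun s => (D.kernel 1 qs 0 s).re) =O[𝓝[≠] 0] (1 : ℝ → ℝ)) :
    Tendsto (fun h : ℝ => (∫ s in (-D.halfPeriod)..D.halfPeriod, (D.kernel 1 qs h s).re)
        - 2 * β * arctan (D.halfPeriod / h)) (𝓝[≠] 0)
      (𝓝 (∫ s in (-D.halfPeriod)..D.halfPeriod, (D.kernel 1 qs 0 s).re)) := by
  rw [integral_re_kernel_zero_eq hqs hβ hker]
  refine (tendsto_integral_re_pole_sub (IsCoeff.residual hqs 1) hβ).congr' ?_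
  filter_upwards [nhdsWithin_le_nhds D.eventually_offset_ne_zero, self_mem_nhdsWithin]
    with h hz (hh : h ≠ 0)
  have hz' (s) (hs : s ∈ Set.Icc (-D.halfPeriod) D.halfPeriod) : D.offset h s ≠ 0 :=
    hz s hs (.inr hh)
  have hpole : IntervalIntegrable (fun s => (pole (D.residual 1 qs s) 1 (D.offset h s)).re)
      volume (-D.halfPeriod) D.halfPeriod := by
    refine ContinuousOn.intervalIntegrable_of_Icc (neg_le_self D.halfPeriod_pos.le) fun s hs => ?_
    exact (Complex.continuous_re.continuousAt.comp
      (continuousAt_pole_residual hqs 1 (hz' s hs))).continuousWithinAt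
  have hpoisson : IntervalIntegrable (fun s : ℝ => β * (h / (s ^ 2 + h ^ 2)))
      volume (-D.halfPeriod) D.halfPeriod :=
    Continuous.intervalIntegrable (by
      have hden (s : ℝ) : s ^ 2 + h ^ 2 ≠ 0 := by positivity
      fun_prop (disch := exact hden _)) _ _
  rw [intervalIntegral.integral_sub hpole hpoisson, intervalIntegral.integral_const_mul,
    integral_poisson _ hh, integral_re_kernel_eq_of_ne_zero hqs hz']
  ring

theorem tendsto_integral_re_kernel (hqs : ∀ q ∈ qs, D.IsCoeff q) {β : ℝ}
    (hβ : (D.residual 1 qs 0).2 = -Complex.I * β)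
    (hker : (fun s => (D.kernel 1 qs 0 s).re) =O[𝓝[≠] 0] (1 : ℝ → ℝ)) :
    Tendsto (fun h : ℝ => ∫ s in (-D.halfPeriod)..D.halfPeriod, (D.kernel 1 qs h s).re) (𝓝[>] 0)
        (𝓝 (β * π + ∫ s in (-D.halfPeriod)..D.halfPeriod, (D.kernel 1 qs 0 s).re)) ∧
      Tendsto (fun h : ℝ => ∫ s in (-D.halfPeriod)..D.halfPeriod, (D.kernel 1 qs h s).re) (𝓝[<] 0)
        (𝓝 (-(β * π) + ∫ s in (-D.halfPeriod)..D.halfPeriod, (D.kernel 1 qs 0 s).re)) := by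
  have hsub := tendsto_integral_re_kernel_sub hqs hβ hker
  have hpos : Tendsto (fun h : ℝ => arctan (D.halfPeriod / h)) (𝓝[>] 0) (𝓝 (π / 2)) :=
    tendsto_arctan_atTop.mono_right nhdsWithin_le_nhds |>.comp
      (tendsto_inv_nhdsGT_zero.const_mul_atTop D.halfPeriod_pos)
  have hneg : Tendsto (fun h : ℝ => arctan (D.halfPeriod / h)) (𝓝[<] 0) (𝓝 (-(π / 2))) :=
    tendsto_arctan_atBot.mono_right nhdsWithin_le_nhds |>.comp
      (tendsto_inv_nhdsLT_zero.const_mul_atBot D.halfPeriod_pos)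
  constructor
  · convert (hpos.const_mul (2 * β)).add
      (hsub.mono_left (nhdsWithin_mono 0 fun h (hh : 0 < h) => hh.ne')) using 2 <;> ring
  · convert (hneg.const_mul (2 * β)).add
      (hsub.mono_left (nhdsWithin_mono 0 fun h (hh : h < 0) => hh.ne)) using 2 <;> ring

end TangentLoop

/-! ### Cancellation of the singularity on the curve -/

/-- `f s` agrees with `exp (i (a s + b s²))` as `s → 0`, up to an error whose real part is `O(s²)`
and whose imaginary part is `O(s³)`. These error terms are stable under products and inverses, and
they are small enough to control the leading singularity of the plate kernel. -/
structure HasPhaseJet (f : ℝ → ℂ) (a b : ℝ) : Prop where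
  re : (fun s => (f s).re - 1) =O[𝓝[≠] 0] fun s : ℝ => s ^ 2
  im : (fun s => (f s).im - (a * s + b * s ^ 2)) =O[𝓝[≠] 0] fun s : ℝ => s ^ 3

lemma isBigO_pow_of_le {m n : ℕ} (hmn : m ≤ n) :
    (fun s : ℝ => s ^ n) =O[𝓝[≠] 0] fun s : ℝ => s ^ m := by
  rcases hmn.eq_or_lt with rfl | hlt
  · exact Asymptotics.isBigO_refl _ _
  · exact (Asymptotics.isLittleO_pow_pow hlt).isBigO.mono nhdsWithin_le_nhds

namespace HasPhaseJet

variable {f g : ℝ → ℂ} {a b a' b' : ℝ}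

lemma isBigO_im (hf : HasPhaseJet f a b) : (fun s => (f s).im) =O[𝓝[≠] 0] fun s : ℝ => s := by
  have hsq := isBigO_pow_of_le one_le_two
  have hcube := isBigO_pow_of_le (show 1 ≤ 3 by norm_num)
  simp only [pow_one] at hsq hcube
  have hlin := (Asymptotics.isBigO_refl (fun s : ℝ => s) (𝓝[≠] 0)).const_mul_left a
  exact ((hf.im.trans hcube).add (hlin.add (hsq.const_mul_left b))).congr_left
    fun s => sub_add_cancel _ _

lemma isBigO_re_sub_one_mul_im (hf : HasPhaseJet f a b) (hg : HasPhaseJet g a' b') :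
    (fun s => ((f s).re - 1) * (g s).im) =O[𝓝[≠] 0] fun s : ℝ => s ^ 3 :=
  (hf.re.mul hg.isBigO_im).congr_right fun s => (pow_succ s 2).symm

lemma tendsto_one (hf : HasPhaseJet f a b) : Tendsto f (𝓝[≠] 0) (𝓝 1) := by
  have hid : Tendsto (fun s : ℝ => s) (𝓝[≠] 0) (𝓝 0) := nhdsWithin_le_nhds
  have hre : Tendsto (fun s => (f s).re - 1) (𝓝[≠] 0) (𝓝 0) :=
    hf.re.trans_tendsto (by simpa using hid.pow 2)
  have him := hf.isBigO_im.trans_tendsto hid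
  have hsum := (Complex.continuous_ofReal.tendsto 0).comp hre |>.add
    ((((Complex.continuous_ofReal.tendsto 0).comp him).mul_const Complex.I).add_const 1)
  simp only [Complex.ofReal_zero, zero_mul, zero_add] at hsum
  refine hsum.congr fun s => ?_
  apply Complex.ext <;> simp

lemma mul (hf : HasPhaseJet f a b) (hg : HasPhaseJet g a' b') :
    HasPhaseJet (fun s => f s * g s) (a + a') (b + b') where
  re := by
    have hre := (hf.re.mul (hg.re.trans (isBigO_pow_of_le zero_le_two))).congr_right
      fun s => by rw [pow_zero, mul_one]
    have him := (hf.isBigO_im.mul hg.isBigO_im).congr_right fun s => (sq s).symm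
    refine ((hre.add (hf.re.add hg.re)).sub him).congr_left fun s => ?_
    simp only [Complex.mul_re]
    ring
  im := by
    refine (((hf.im.add hg.im).add (hf.isBigO_re_sub_one_mul_im hg)).add
      (hg.isBigO_re_sub_one_mul_im hf)).congr_left fun s => ?_
    simp only [Complex.mul_im]
    ring

lemma star (hf : HasPhaseJet f a b) : HasPhaseJet (fun s => conj (f s)) (-a) (-b) where
  re := hf.re
  im := hf.im.neg_left.congr_left fun s => by simp only [Complex.conj_im]; ring

lemma one : HasPhaseJet (fun _ => 1) 0 0 where
  re := by simpa using Asymptotics.isBigO_zero _ _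
  im := by simpa using Asymptotics.isBigO_zero _ _

lemma pow (hf : HasPhaseJet f a b) (n : ℕ) : HasPhaseJet (fun s => f s ^ n) (n * a) (n * b) := by
  induction n with
  | zero => simpa using one
  | succ n ih => simpa [pow_succ, add_mul] using ih.mul hf

lemma inv (hf : HasPhaseJet f a b) : HasPhaseJet (fun s => (f s)⁻¹) (-a) (-b) := by
  have hne : ∀ᶠ s in 𝓝[≠] 0, Complex.normSq (f s) ≠ 0 :=
    (hf.tendsto_one.eventually_ne one_ne_zero).mono fun s hs => by simpa using hs
  have hN : (fun s => (Complex.normSq (f s))⁻¹) =O[𝓝[≠] 0] fun s : ℝ => s ^ 0 := by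
    have := ((Complex.continuous_normSq.tendsto 1).comp hf.tendsto_one).inv₀ (by simp)
    simpa using this.isBigO_one ℝ
  have hN1 : (fun s => 1 - Complex.normSq (f s)) =O[𝓝[≠] 0] fun s : ℝ => s ^ 2 := by
    refine (hf.mul hf.star).re.neg_left.congr_left fun s => ?_
    simp [Complex.mul_conj]
  have hNinv : (fun s => (Complex.normSq (f s))⁻¹ - 1) =O[𝓝[≠] 0] fun s : ℝ => s ^ 2 := by
    refine (hN1.mul hN).congr' (hne.mono fun s hs => ?_) (.of_forall fun s => by ring)
    field_simp
  constructor
  · refine (((hf.re.mul hN).congr_right fun s => by ring).add hNinv).congr_left fun s => ?_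
    simp only [Complex.inv_re]
    ring
  · refine (hf.im.add ((hNinv.mul hf.isBigO_im).congr_right
      fun s => (pow_succ s 2).symm)).neg_left.congr_left fun s => ?_
    simp only [Complex.inv_im]
    ring

lemma isBigO_re_real_mul_sub (hf : HasPhaseJet f a b) (c : ℝ) :
    (fun s => (c * f s).re - c) =O[𝓝[≠] 0] fun s : ℝ => s ^ 2 :=
  (hf.re.const_mul_left c).congr_left fun s => by simp only [Complex.re_ofReal_mul]; ring

lemma isBigO_im_real_mul_sub (hf : HasPhaseJet f a b) (c : ℝ) :
    (fun s => (c * f s).im - c * (a * s + b * s ^ 2)) =O[𝓝[≠] 0] fun s : ℝ => s ^ 3 :=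
  (hf.im.const_mul_left c).congr_left fun s => by simp only [Complex.im_ofReal_mul]; ring

end HasPhaseJet

lemma biharmonicPole_ofReal_mul (P S : ℂ) (k : ℕ) {c : ℝ} (hc : c ≠ 0) (z : ℂ) :
    biharmonicPole P S k (c * z) = biharmonicPole P S k z / c ^ k := by
  have hc' : (c : ℂ) ≠ 0 := Complex.ofReal_ne_zero.mpr hc
  have hphase : P * conj (c * z) / (c * z) = P * conj z / z := by
    rw [map_mul, Complex.conj_ofReal, mul_left_comm, mul_div_mul_left _ _ hc']
  rw [biharmonicPole, hphase, mul_pow, mul_comm (_ ^ k), ← div_div, ← Complex.ofReal_pow,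
    Complex.div_ofReal_re, biharmonicPole]

lemma isBigO_mul_sub_mul_const {l : Filter ℝ} {f f₀ g φ : ℝ → ℝ} {c : ℝ}
    (hφ : φ =O[l] (1 : ℝ → ℝ)) (hf₀ : f₀ =O[l] (1 : ℝ → ℝ)) (hf : (fun s => f s - f₀ s) =O[l] φ)
    (hg : (fun s => g s - c) =O[l] φ) : (fun s => f s * g s - f₀ s * c) =O[l] φ := by
  have hg1 : g =O[l] (1 : ℝ → ℝ) :=
    ((hg.trans hφ).add (Asymptotics.isBigO_const_const c one_ne_zero l)).congr_left
      fun s => sub_add_cancel _ _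
  refine (((hf.mul hg1).congr_right fun s => mul_one _).add
    ((hf₀.mul hg).congr_right fun s => one_mul _)).congr_left fun s => ?_
  ring

section PlateKernelOnCurve

variable {u p : ℝ → ℂ} {a b : ℝ}

lemma isBigO_biharmonicPole_three_add (ν : ℝ) (hu : HasPhaseJet u a b)
    (hp : HasPhaseJet p (a / 2) (b / 3)) :
    (fun s => biharmonicPole (6 * Complex.I * (1 - ν) ^ 2 * u s ^ 3)
        (4 * Complex.I * (1 - ν) * (1 + ν) * u s ^ 3
          - 2 * Complex.I * (1 - ν) * (5 - ν) * u s) 3 (p s)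
        + (1 - ν) * ((14 + 2 * ν) * a * s + 16 * b * s ^ 2)) =O[𝓝[≠] 0] fun s : ℝ => s ^ 3 := by
  have h₁ := (((hu.pow 3).mul hp.star).mul (hp.inv.pow 4)).isBigO_im_real_mul_sub (6 * (1 - ν) ^ 2)
  have h₂ := ((hu.pow 3).mul (hp.inv.pow 3)).isBigO_im_real_mul_sub (4 * (1 - ν) * (1 + ν))
  have h₃ := (hu.mul (hp.inv.pow 3)).isBigO_im_real_mul_sub (2 * (1 - ν) * (5 - ν))
  refine ((h₁.add h₂).sub h₃).neg_left.congr_left fun s => ?_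
  have hpole : biharmonicPole (6 * Complex.I * (1 - ν) ^ 2 * u s ^ 3)
      (4 * Complex.I * (1 - ν) * (1 + ν) * u s ^ 3
        - 2 * Complex.I * (1 - ν) * (5 - ν) * u s) 3 (p s) =
      (Complex.I * ((6 * (1 - ν) ^ 2 : ℝ) * (u s ^ 3 * conj (p s) * (p s)⁻¹ ^ 4)
        + (4 * (1 - ν) * (1 + ν) : ℝ) * (u s ^ 3 * (p s)⁻¹ ^ 3)
        - (2 * (1 - ν) * (5 - ν) : ℝ) * (u s * (p s)⁻¹ ^ 3))).re := by
    rw [biharmonicPole]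
    push_cast
    ring_nf
  rw [hpole, Complex.I_mul_re, Complex.sub_im, Complex.add_im]
  push_cast
  ring

lemma isBigO_mul_biharmonicPole_two_sub (ν : ℝ) {κ : ℝ → ℝ} (hu : HasPhaseJet u a b)
    (hp : HasPhaseJet p (a / 2) (b / 3))
    (hκ : (fun s => κ s - (a + 2 * b * s)) =O[𝓝[≠] 0] fun s : ℝ => s ^ 2) :
    (fun s => κ s * biharmonicPole (2 * (1 - ν) * u s ^ 2)
        (2 * (1 - ν) + 2 * (1 + ν) * u s ^ 2) 2 (p s) - (a + 2 * b * s) * (6 - 2 * ν))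
      =O[𝓝[≠] 0] fun s : ℝ => s ^ 2 := by
  have h₁ := (((hu.pow 2).mul hp.star).mul (hp.inv.pow 3)).isBigO_re_real_mul_sub (2 * (1 - ν))
  have h₂ := (hp.inv.pow 2).isBigO_re_real_mul_sub (2 * (1 - ν))
  have h₃ := ((hu.pow 2).mul (hp.inv.pow 2)).isBigO_re_real_mul_sub (2 * (1 + ν))
  have hlin : (fun s : ℝ => a + 2 * b * s) =O[𝓝[≠] 0] (1 : ℝ → ℝ) :=
    ((Continuous.tendsto (by fun_prop) _).mono_left nhdsWithin_le_nhds).isBigO_one ℝ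
  refine isBigO_mul_sub_mul_const (by simpa [Pi.one_def] using isBigO_pow_of_le zero_le_two)
    hlin hκ (((h₁.add h₂).add h₃).congr_left fun s => ?_)
  have hpole : biharmonicPole (2 * (1 - ν) * u s ^ 2) (2 * (1 - ν) + 2 * (1 + ν) * u s ^ 2) 2
      (p s) = ((2 * (1 - ν) : ℝ) * (u s ^ 2 * conj (p s) * (p s)⁻¹ ^ 3)
        + (2 * (1 - ν) : ℝ) * (p s)⁻¹ ^ 2
        + (2 * (1 + ν) : ℝ) * (u s ^ 2 * (p s)⁻¹ ^ 2)).re := by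
    rw [biharmonicPole]
    push_cast
    ring_nf
  rw [hpole, Complex.add_re, Complex.add_re]
  ring

lemma isBigO_mul_biharmonicPole_one_add (ν : ℝ) {κ' : ℝ → ℝ} (hu : HasPhaseJet u a b)
    (hp : HasPhaseJet p (a / 2) (b / 3))
    (hκ' : (fun s => κ' s - 2 * b) =O[𝓝[≠] 0] fun s : ℝ => s) :
    (fun s => κ' s * biharmonicPole (-(1 - ν) * u s)
        ((1 - ν) * conj (u s) - 2 * (1 + ν) * u s) 1 (p s) - 2 * b * -(2 * (1 + ν)))
      =O[𝓝[≠] 0] fun s : ℝ => s := by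
  have h₁ := ((hu.mul hp.star).mul (hp.inv.pow 2)).isBigO_re_real_mul_sub (-(1 - ν))
  have h₂ := (hu.star.mul hp.inv).isBigO_re_real_mul_sub (1 - ν)
  have h₃ := (hu.mul hp.inv).isBigO_re_real_mul_sub (2 * (1 + ν))
  have hsq := isBigO_pow_of_le one_le_two
  have hid := isBigO_pow_of_le zero_le_one
  simp only [pow_one, pow_zero] at hsq hid
  refine isBigO_mul_sub_mul_const hid (Asymptotics.isBigO_const_const (2 * b) one_ne_zero _) hκ'
    ((((h₁.add h₂).sub h₃).trans hsq).congr_left fun s => ?_)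
  have hpole : biharmonicPole (-(1 - ν) * u s) ((1 - ν) * conj (u s) - 2 * (1 + ν) * u s) 1
      (p s) = ((-(1 - ν) : ℝ) * (u s * conj (p s) * (p s)⁻¹ ^ 2)
        + (1 - ν : ℝ) * (conj (u s) * (p s)⁻¹)
        - (2 * (1 + ν) : ℝ) * (u s * (p s)⁻¹)).re := by
    rw [biharmonicPole]
    push_cast
    ring_nf
  rw [hpole, Complex.sub_re, Complex.add_re]
  ring

lemma isBigO_plateKernel {ν α₂ α₃ : ℝ} {κ κ' : ℝ → ℝ} (hα₂ : α₂ * (3 - ν) = (ν - 1) * (7 + ν))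
    (hα₃ : α₃ * (1 + ν) = (1 - ν) * (3 + ν)) (hu : HasPhaseJet u a b)
    (hp : HasPhaseJet p (a / 2) (b / 3))
    (hκ : (fun s => κ s - (a + 2 * b * s)) =O[𝓝[≠] 0] fun s : ℝ => s ^ 2)
    (hκ' : (fun s => κ' s - 2 * b) =O[𝓝[≠] 0] fun s : ℝ => s) :
    (fun s => plateKernel ν α₂ α₃ (u s) (κ s) (κ' s) (-(s * p s))) =O[𝓝[≠] 0] (1 : ℝ → ℝ) := by
  set third := fun s => biharmonicPole (6 * Complex.I * (1 - ν) ^ 2 * u s ^ 3)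
    (4 * Complex.I * (1 - ν) * (1 + ν) * u s ^ 3 - 2 * Complex.I * (1 - ν) * (5 - ν) * u s) 3 (p s)
  set second := fun s => biharmonicPole (2 * (1 - ν) * u s ^ 2)
    (2 * (1 - ν) + 2 * (1 + ν) * u s ^ 2) 2 (p s)
  set first := fun s => biharmonicPole (-(1 - ν) * u s)
    ((1 - ν) * conj (u s) - 2 * (1 + ν) * u s) 1 (p s)
  have hthird : (fun s => third s + (1 - ν) * ((14 + 2 * ν) * a * s + 16 * b * s ^ 2))
      =O[𝓝[≠] 0] fun s : ℝ => s ^ 3 := isBigO_biharmonicPole_three_add ν hu hp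
  have hsecond := (Asymptotics.isBigO_refl (fun s : ℝ => s) _).mul
    (isBigO_mul_biharmonicPole_two_sub ν hu hp hκ)
  have hfirst := (Asymptotics.isBigO_refl (fun s : ℝ => s ^ 2) _).mul
    (isBigO_mul_biharmonicPole_one_add ν hu hp hκ')
  simp only [← pow_succ', ← pow_succ] at hsecond hfirst
  have hnum : (fun s => -third s + α₂ * (s * (κ s * second s)) - α₃ * (s ^ 2 * (κ' s * first s)))
      =O[𝓝[≠] 0] fun s : ℝ => s ^ 3 := by
    refine ((hthird.neg_left.add (hsecond.const_mul_left α₂)).sub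
      (hfirst.const_mul_left α₃)).congr_left fun s => ?_
    linear_combination (-2 * a * s - 4 * b * s ^ 2) * hα₂ - 4 * b * s ^ 2 * hα₃
  refine (hnum.mul (Asymptotics.isBigO_refl (fun s : ℝ => (s ^ 3)⁻¹) _)).congr' ?_ ?_
  · filter_upwards [self_mem_nhdsWithin] with s (hs : s ≠ 0)
    have hscale (P S : ℂ) (k : ℕ) : biharmonicPole P S k (-(s * p s)) =
        biharmonicPole P S k (p s) / (-s) ^ k := by
      rw [← neg_mul, ← Complex.ofReal_neg, biharmonicPole_ofReal_mul _ _ _ (neg_ne_zero.mpr hs)]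
    simp only [plateKernel, hscale, third, second, first]
    field_simp
    ring
  · filter_upwards [self_mem_nhdsWithin] with s (hs : s ≠ 0)
    exact mul_inv_cancel₀ (pow_ne_zero 3 hs)

end PlateKernelOnCurve

namespace TangentLoop

variable (D : TangentLoop)

/-- The signed curvature of the loop, positive where it turns counterclockwise. -/
def curvature (s : ℝ) : ℝ := (conj (D.tangent s) * deriv D.tangent s).im

lemma isCoeff_curvature : D.IsCoeff D.curvature where
  contDiff := Complex.imCLM.contDiff.comp
    (D.isCoeff_tangent.star.contDiff.mul D.isCoeff_tangent.deriv.contDiff)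
  periodic s := by
    simp only [curvature, D.isCoeff_tangent.periodic s, D.isCoeff_tangent.deriv.periodic s]

lemma hasDerivAt_tangent (s : ℝ) :
    HasDerivAt D.tangent (Complex.I * D.curvature s * D.tangent s) s := by
  have hu := D.isCoeff_tangent.hasDerivAt s
  have hconst : HasDerivAt (fun r => D.tangent r * conj (D.tangent r)) 0 s :=
    (hasDerivAt_const s (1 : ℂ)).congr_of_eventuallyEq (.of_forall D.tangent_mul_conj)
  have hre : (conj (D.tangent s) * deriv D.tangent s).re = 0 := by
    have h := congrArg Complex.re ((hu.mul hu.star).unique hconst)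
    simp only [Complex.add_re, Complex.mul_re, Complex.conj_re, Complex.conj_im,
      Complex.star_def, Complex.zero_re] at h ⊢
    linarith
  have him : Complex.I * D.curvature s = conj (D.tangent s) * deriv D.tangent s := by
    apply Complex.ext <;> simp [curvature, hre]
  refine hu.congr_deriv ?_
  rw [him, mul_right_comm, mul_comm (conj _), D.tangent_mul_conj, one_mul]

lemma hasDerivAt_re_tangent (s : ℝ) :
    HasDerivAt (fun r => (D.tangent r).re) (-(D.curvature s * (D.tangent s).im)) s := by
  simpa [mul_assoc] using hasDerivAt_re (D.hasDerivAt_tangent s)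

lemma hasDerivAt_im_tangent (s : ℝ) :
    HasDerivAt (fun r => (D.tangent r).im) (D.curvature s * (D.tangent s).re) s := by
  simpa [mul_assoc] using hasDerivAt_im (D.hasDerivAt_tangent s)

lemma isBigO_deriv_curvature_sub :
    (fun s => deriv D.curvature s - deriv D.curvature 0) =O[𝓝 0] fun s : ℝ => s := by
  simpa using (D.isCoeff_curvature.deriv.hasDerivAt 0).isBigO_sub

lemma isBigO_curvature_sub :
    (fun s => D.curvature s - (D.curvature 0 + deriv D.curvature 0 * s)) =O[𝓝 0]
      fun s : ℝ => s ^ 2 :=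
  isBigO_pow_succ_of_hasDerivAt (fun s => (D.isCoeff_curvature.hasDerivAt s).sub
      (((hasDerivAt_id s).const_mul _).const_add _)) (by simp)
    (by simpa using D.isBigO_deriv_curvature_sub)

lemma isBigO_one_curvature : D.curvature =O[𝓝 0] (1 : ℝ → ℝ) :=
  (D.isCoeff_curvature.continuous.tendsto 0).isBigO_one ℝ

lemma isBigO_re_tangent_sub_one :
    (fun s => (D.tangent s).re - 1) =O[𝓝 0] fun s : ℝ => s ^ 2 := by
  have him : (fun s => (D.tangent s).im) =O[𝓝 0] fun s : ℝ => s := by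
    refine (Asymptotics.isBigO_of_le _ fun s => ?_).trans D.isBigO_tangent_sub_one
    simpa using Complex.abs_im_le_norm (D.tangent s - 1)
  refine isBigO_pow_succ_of_hasDerivAt (fun s => (D.hasDerivAt_re_tangent s).sub_const 1)
    (by simp [tangent, D.deriv_zero]) ?_
  simpa using (D.isBigO_one_curvature.mul him).neg_left

lemma isBigO_im_tangent_sub : (fun s => (D.tangent s).im
    - (D.curvature 0 * s + deriv D.curvature 0 / 2 * s ^ 2)) =O[𝓝 0] fun s : ℝ => s ^ 3 := by
  have hsq (s : ℝ) : HasDerivAt (fun r : ℝ => r ^ 2) (2 * s) s := by simpa using hasDerivAt_pow 2 s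
  refine isBigO_pow_succ_of_hasDerivAt (fun s => (D.hasDerivAt_im_tangent s).sub
    (((hasDerivAt_id s).const_mul _).add ((hsq s).const_mul _)))
    (by simp [tangent, D.deriv_zero]) ?_
  refine (((D.isBigO_one_curvature.mul D.isBigO_re_tangent_sub_one).congr_right
    fun s => one_mul _).add D.isBigO_curvature_sub).congr_left fun s => ?_
  ring

lemma hasPhaseJet_tangent :
    HasPhaseJet D.tangent (D.curvature 0) (deriv D.curvature 0 / 2) where
  re := D.isBigO_re_tangent_sub_one.mono nhdsWithin_le_nhds
  im := D.isBigO_im_tangent_sub.mono nhdsWithin_le_nhds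

lemma isBigO_re_curve_sub : (fun s => (D.curve s).re - s) =O[𝓝 0] fun s : ℝ => s ^ 3 :=
  isBigO_pow_succ_of_hasDerivAt
    (fun s => (hasDerivAt_re (D.hasDerivAt_curve s)).sub (hasDerivAt_id s))
    (by simp [D.curve_zero]) D.isBigO_re_tangent_sub_one

lemma isBigO_im_curve_sub : (fun s => (D.curve s).im
    - (D.curvature 0 / 2 * s ^ 2 + deriv D.curvature 0 / 6 * s ^ 3)) =O[𝓝 0]
      fun s : ℝ => s ^ 4 := by
  refine isBigO_pow_succ_of_hasDerivAt (fun s => (hasDerivAt_im (D.hasDerivAt_curve s)).sub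
    (((hasDerivAt_pow 2 s).const_mul _).add ((hasDerivAt_pow 3 s).const_mul _)))
    (by simp [D.curve_zero]) (D.isBigO_im_tangent_sub.congr_left fun s => ?_)
  push_cast
  ring

lemma hasPhaseJet_curve_div : HasPhaseJet (fun s => D.curve s / s) (D.curvature 0 / 2)
    (deriv D.curvature 0 / 2 / 3) := by
  have hdiv {f : ℝ → ℝ} {n : ℕ} (hf : f =O[𝓝 0] fun s : ℝ => s ^ (n + 1)) :
      (fun s => f s / s) =O[𝓝[≠] 0] fun s : ℝ => s ^ n := by
    refine ((hf.mono nhdsWithin_le_nhds).mul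
      (Asymptotics.isBigO_refl (fun s : ℝ => s⁻¹) (𝓝[≠] 0))).congr' .rfl ?_
    filter_upwards [self_mem_nhdsWithin] with s (hs : s ≠ 0)
    rw [pow_succ, mul_inv_cancel_right₀ hs]
  constructor
  · refine (hdiv D.isBigO_re_curve_sub).congr' ?_ .rfl
    filter_upwards [self_mem_nhdsWithin] with s (hs : s ≠ 0)
    rw [Complex.div_ofReal_re, sub_div, div_self hs]
  · refine (hdiv D.isBigO_im_curve_sub).congr' ?_ .rfl
    filter_upwards [self_mem_nhdsWithin] with s (hs : s ≠ 0)
    rw [Complex.div_ofReal_im]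
    field_simp
    ring

/-! ### The plate kernel as a sum of poles -/

lemma tangent_ne_zero (s : ℝ) : D.tangent s ≠ 0 :=
  left_ne_zero_of_mul_eq_one (D.tangent_mul_conj s)

lemma isCoeff_tangent_zpow (m : ℤ) : D.IsCoeff fun s => D.tangent s ^ m where
  contDiff := by
    have hu := D.isCoeff_tangent.contDiff
    cases m with
    | ofNat n => simpa using hu.pow n
    | negSucc n =>
      simp only [zpow_negSucc]
      exact (hu.pow (n + 1)).inv fun s => pow_ne_zero _ (D.tangent_ne_zero s)
  periodic s := by simp only [D.isCoeff_tangent.periodic s]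

lemma hasDerivAt_tangent_zpow (m : ℤ) (s : ℝ) :
    HasDerivAt (fun r => D.tangent r ^ m) (Complex.I * m * D.curvature s * D.tangent s ^ m) s := by
  refine ((hasDerivAt_zpow m _ (.inl (D.tangent_ne_zero s))).scomp s
    (D.hasDerivAt_tangent s)).congr_deriv ?_
  rw [zpow_sub_one₀ (D.tangent_ne_zero s), smul_eq_mul]
  field_simp [D.tangent_ne_zero s]

/-- The coefficient of the numerator `u ^ m * a * z̄ + u ^ (m + 1) * b + u ^ (m - 1) * c`, where
`u` is the tangent. This shape is kept by integrations by parts, each of which lowers `m` by one. -/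
def twist (m : ℤ) (a b c : ℝ → ℂ) (s : ℝ) : ℂ × ℂ :=
  (D.tangent s ^ m * a s, D.tangent s ^ (m + 1) * b s + D.tangent s ^ (m - 1) * c s)

variable {D} {a b c a' b' c' : ℝ → ℂ}

lemma isCoeff_twist (ha : D.IsCoeff a) (hb : D.IsCoeff b) (hc : D.IsCoeff c) (m : ℤ) :
    D.IsCoeff (D.twist m a b c) where
  contDiff := by
    have hu := D.isCoeff_tangent_zpow
    exact ((hu m).contDiff.mul ha.contDiff).prodMk
      (((hu (m + 1)).contDiff.mul hb.contDiff).add ((hu (m - 1)).contDiff.mul hc.contDiff))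
  periodic s := by
    simp only [twist, D.isCoeff_tangent.periodic s, ha.periodic s, hb.periodic s, hc.periodic s]

lemma descend_twist (ha : ∀ s, HasDerivAt a (a' s) s) (hb : ∀ s, HasDerivAt b (b' s) s)
    (hc : ∀ s, HasDerivAt c (c' s) s) (m : ℤ) :
    D.descend (D.twist (m + 1) a b c) = D.twist m
      (fun s => a' s + Complex.I * m * D.curvature s * a s)
      (fun s => b' s + Complex.I * (m + 1) * D.curvature s * b s)
      (fun s => c' s + Complex.I * (m - 1) * D.curvature s * c s - a s) := by
  funext s
  have hu := D.hasDerivAt_tangent_zpow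
  have hconj (r : ℝ) : conj (D.tangent r) = (D.tangent r)⁻¹ :=
    eq_inv_of_mul_eq_one_right (D.tangent_mul_conj r)
  have hsmul : (fun r => conj (D.tangent r) • D.twist (m + 1) a b c r) = fun r =>
      (D.tangent r ^ m * a r, D.tangent r ^ (m + 1) * b r + D.tangent r ^ (m - 1) * c r) := by
    funext r
    have hne := D.tangent_ne_zero r
    simp only [twist, hconj, Prod.smul_mk, smul_eq_mul, zpow_add₀ hne, zpow_sub₀ hne, zpow_one]
    field_simp
  have hderiv := (((hu m s).fun_mul (ha s)).prodMk
    (((hu (m + 1) s).fun_mul (hb s)).fun_add ((hu (m - 1) s).fun_mul (hc s)))).deriv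
  have hne := D.tangent_ne_zero s
  simp only [descend]
  rw [hsmul, hderiv]
  simp only [twist, hconj, zpow_add₀ hne, zpow_sub₀ hne, zpow_one]
  push_cast
  ext <;> field_simp <;> ring

lemma residual_cons_twist {qs : List (ℝ → ℂ × ℂ)} {k : ℕ} {m : ℤ}
    (hqs : D.residual (k + 1) qs = D.twist (m + 1) a b c) (ha : ∀ s, HasDerivAt a (a' s) s)
    (hb : ∀ s, HasDerivAt b (b' s) s) (hc : ∀ s, HasDerivAt c (c' s) s) (a₀ b₀ c₀ : ℝ → ℂ) :
    D.residual k (D.twist m a₀ b₀ c₀ :: qs) = D.twist m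
      (fun s => a₀ s - (k : ℂ)⁻¹ * (a' s + Complex.I * m * D.curvature s * a s))
      (fun s => b₀ s - (k : ℂ)⁻¹ * (b' s + Complex.I * (m + 1) * D.curvature s * b s))
      (fun s => c₀ s - (k : ℂ)⁻¹ * (c' s + Complex.I * (m - 1) * D.curvature s * c s - a s)) := by
  funext s
  rw [residual, hqs, descend_twist ha hb hc]
  simp only [twist, Prod.smul_mk, Prod.mk_sub_mk, smul_eq_mul]
  ext <;> ring

variable (D) in
/-- The coefficients of the poles of orders `1, 2, 3, 4` of the supported-plate kernel with
density `σ` along the loop, see `re_kernel_plateCoeffs`. -/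
def plateCoeffs (ν α₂ α₃ : ℝ) (σ : ℝ → ℝ) : List (ℝ → ℂ × ℂ) :=
  let κσ : ℝ → ℝ := fun s => D.curvature s * σ s
  let κ'σ : ℝ → ℝ := fun s => deriv D.curvature s * σ s
  [D.twist 0 (fun _ => 0) (fun s => -2 * (1 + ν) * α₃ * κ'σ s) (fun s => (1 - ν) * α₃ * κ'σ s),
    D.twist 1 (fun s => -(1 - ν) * α₃ * κ'σ s) (fun s => 2 * (1 + ν) * α₂ * κσ s)
      (fun s => 2 * (1 - ν) * α₂ * κσ s),
    D.twist 2 (fun s => 2 * (1 - ν) * α₂ * κσ s)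
      (fun s => 4 * Complex.I * (1 - ν) * (1 + ν) * σ s)
      (fun s => -2 * Complex.I * (1 - ν) * (5 - ν) * σ s),
    D.twist 3 (fun s => 6 * Complex.I * (1 - ν) ^ 2 * σ s) (fun _ => 0) (fun _ => 0)]

variable {σ : ℝ → ℝ}

lemma isCoeff_of_mem_plateCoeffs (hσ : D.IsCoeff σ) (ν α₂ α₃ : ℝ) :
    ∀ q ∈ D.plateCoeffs ν α₂ α₃ σ, D.IsCoeff q := by
  have hκ := D.isCoeff_curvature
  have h0 : D.IsCoeff fun _ => (0 : ℂ) := ⟨contDiff_const, fun _ => rfl⟩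
  have hσ' := hσ.const_mul_ofReal
  have hκσ := (hκ.mul hσ).const_mul_ofReal
  have hκ'σ := (hκ.deriv.mul hσ).const_mul_ofReal
  simp only [plateCoeffs, List.forall_mem_cons, List.not_mem_nil, false_implies, implies_true,
    and_true]
  exact ⟨isCoeff_twist h0 (hκ'σ _) (hκ'σ _) 0, isCoeff_twist (hκ'σ _) (hκσ _) (hκσ _) 1,
    isCoeff_twist (hκσ _) (hσ' _) (hσ' _) 2, isCoeff_twist (hσ' _) h0 h0 3⟩

lemma re_kernel_plateCoeffs (ν α₂ α₃ : ℝ) (σ : ℝ → ℝ) (h s : ℝ) :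
    (D.kernel 1 (D.plateCoeffs ν α₂ α₃ σ) h s).re =
      plateKernel ν α₂ α₃ (D.tangent s) (D.curvature s) (deriv D.curvature s) (D.offset h s)
        * σ s := by
  have hconj : conj (D.tangent s) = (D.tangent s)⁻¹ :=
    eq_inv_of_mul_eq_one_right (D.tangent_mul_conj s)
  have hne := D.tangent_ne_zero s
  simp only [plateKernel, biharmonicPole, ← Complex.re_ofReal_mul,
    ← Complex.add_re, ← Complex.re_mul_ofReal]
  congr 1
  simp only [plateCoeffs, kernel, twist, pole, hconj]
  simp only [zpow_ofNat, zpow_neg, Int.reduceNeg, Int.reduceAdd, Int.reduceSub, zero_add, zero_sub,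
    sub_self, pow_zero, pow_one, Complex.ofReal_mul]
  rcases eq_or_ne (D.offset h s) 0 with hz | hz
  · simp [hz]
  · field_simp
    ring

lemma residual_three_plateCoeffs (hσ : D.IsCoeff σ) (ν α₂ α₃ : ℝ) :
    D.residual 3 ((D.plateCoeffs ν α₂ α₃ σ).drop 2) = D.twist 2
      (fun s => 2 * (1 - ν) * (α₂ + 2 * (1 - ν)) * (D.curvature s * σ s : ℝ)
        + -2 * Complex.I * (1 - ν) ^ 2 * (deriv σ s : ℝ))
      (fun s => 4 * Complex.I * (1 - ν) * (1 + ν) * σ s)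
      (fun s => -8 * Complex.I * (1 - ν) * σ s) := by
  have h0 (s : ℝ) : HasDerivAt (fun _ => (0 : ℂ)) 0 s := hasDerivAt_const _ _
  have h5 : D.residual 5 [] = D.twist 4 (fun _ => 0) (fun _ => 0) (fun _ => 0) := by
    funext s
    simp only [residual, twist, mul_zero, add_zero]
    rfl
  have h4 := residual_cons_twist (k := 4) (m := 3) h5 h0 h0 h0
    (fun s => 6 * Complex.I * (1 - ν) ^ 2 * σ s) (fun _ => 0) (fun _ => 0)
  simp only [mul_zero, add_zero, sub_zero] at h4
  refine (residual_cons_twist (k := 3) (m := 2) h4 (hσ.hasDerivAt_const_mul_ofReal _) h0 h0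
    _ _ _).trans ?_
  congr 1 <;> funext s <;> push_cast
  · linear_combination -4 * (1 - ν) ^ 2 * D.curvature s * σ s * Complex.I_sq
  · ring
  · ring

lemma residual_two_plateCoeffs (hσ : D.IsCoeff σ) (ν α₂ α₃ : ℝ) :
    D.residual 2 ((D.plateCoeffs ν α₂ α₃ σ).drop 1) = D.twist 1
      (fun s => -(1 - ν) * α₃ * (deriv D.curvature s * σ s : ℝ)
        + -(1 - ν) * (α₂ + 2 * (1 - ν)) * (deriv (fun r => D.curvature r * σ r) s : ℝ)
        + Complex.I * (1 - ν) ^ 2 * (deriv (deriv σ) s : ℝ)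
        + -Complex.I * (1 - ν) * (α₂ + 2 * (1 - ν)) * (D.curvature s * (D.curvature s * σ s) : ℝ)
        + -(1 - ν) ^ 2 * (D.curvature s * deriv σ s : ℝ))
      (fun s => 2 * (1 + ν) * (α₂ + 2 * (1 - ν)) * (D.curvature s * σ s : ℝ)
        + -2 * Complex.I * (1 - ν) * (1 + ν) * (deriv σ s : ℝ))
      (fun s => (1 - ν) * (3 * α₂ + 2 * (1 - ν)) * (D.curvature s * σ s : ℝ)
        + Complex.I * (1 - ν) * (3 + ν) * (deriv σ s : ℝ)) := by
  have hκσ := D.isCoeff_curvature.mul hσ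
  refine (residual_cons_twist (k := 2) (m := 1) (residual_three_plateCoeffs hσ ν α₂ α₃)
    (fun s => (hκσ.hasDerivAt_const_mul_ofReal _ s).fun_add
      (hσ.deriv.hasDerivAt_const_mul_ofReal _ s))
    (hσ.hasDerivAt_const_mul_ofReal _) (hσ.hasDerivAt_const_mul_ofReal _) _ _ _).trans ?_
  congr 1 <;> funext s <;> push_cast
  · linear_combination (1 - ν) ^ 2 * D.curvature s * (deriv σ s : ℝ) * Complex.I_sq
  · linear_combination
      -4 * (1 - ν) * (1 + ν) * D.curvature s * σ s * Complex.I_sq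
  · ring

lemma residual_one_plateCoeffs_zero (hσ : D.IsCoeff σ) {ν α₂ α₃ : ℝ}
    (hα₂ : α₂ * (3 - ν) = (ν - 1) * (7 + ν)) (hα₃ : α₃ * (1 + ν) = (1 - ν) * (3 + ν)) :
    (D.residual 1 (D.plateCoeffs ν α₂ α₃ σ) 0).2 =
      -Complex.I * (4 * ((1 - ν) * (1 + ν) + ν * α₂) * D.curvature 0 ^ 2 * σ 0 : ℝ) := by
  have hκ := D.isCoeff_curvature
  have hκσ := hκ.mul hσ
  have hderiv : deriv (fun r => D.curvature r * σ r) 0 =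
      deriv D.curvature 0 * σ 0 + D.curvature 0 * deriv σ 0 :=
    ((hκ.hasDerivAt 0).mul (hσ.hasDerivAt 0)).deriv
  have h1 := residual_cons_twist (k := 1) (m := 0) (residual_two_plateCoeffs hσ ν α₂ α₃)
    (fun s => (((((hκ.deriv.mul hσ).hasDerivAt_const_mul_ofReal _ s).fun_add
      (hκσ.deriv.hasDerivAt_const_mul_ofReal _ s)).fun_add
      (hσ.deriv.deriv.hasDerivAt_const_mul_ofReal _ s)).fun_add
      ((hκ.mul hκσ).hasDerivAt_const_mul_ofReal _ s)).fun_add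
      ((hκ.mul hσ.deriv).hasDerivAt_const_mul_ofReal _ s))
    (fun s => (hκσ.hasDerivAt_const_mul_ofReal _ s).fun_add
      (hσ.deriv.hasDerivAt_const_mul_ofReal _ s))
    (fun s => (hκσ.hasDerivAt_const_mul_ofReal _ s).fun_add
      (hσ.deriv.hasDerivAt_const_mul_ofReal _ s))
    (fun _ => 0) (fun s => -2 * (1 + ν) * α₃ * (deriv D.curvature s * σ s : ℝ))
    (fun s => (1 - ν) * α₃ * (deriv D.curvature s * σ s : ℝ))
  rw [plateCoeffs]
  refine (congrArg (fun q => (q 0).2) h1).trans ?_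
  have htan : D.tangent 0 = 1 := D.deriv_zero
  simp only [twist, htan, one_zpow, one_mul, hderiv]
  push_cast
  have hα₂' : (α₂ * (3 - ν) : ℂ) = (ν - 1) * (7 + ν) := mod_cast hα₂
  have hα₃' : (α₃ * (1 + ν) : ℂ) = (1 - ν) * (3 + ν) := mod_cast hα₃
  linear_combination -2 * (deriv D.curvature 0 : ℝ) * σ 0 * (hα₂' + hα₃')
    - 2 * D.curvature 0 * (deriv σ 0 : ℝ) * hα₂'
    + (1 - ν) * (5 + 3 * ν) * D.curvature 0 * (deriv σ 0 : ℝ) * Complex.I_sq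

variable {ν α₂ α₃ : ℝ}

lemma isBigO_re_kernel_plateCoeffs (hσ : D.IsCoeff σ)
    (hα₂ : α₂ * (3 - ν) = (ν - 1) * (7 + ν)) (hα₃ : α₃ * (1 + ν) = (1 - ν) * (3 + ν)) :
    (fun s => (D.kernel 1 (D.plateCoeffs ν α₂ α₃ σ) 0 s).re) =O[𝓝[≠] 0] (1 : ℝ → ℝ) := by
  have hκ : (fun s => D.curvature s - (D.curvature 0 + 2 * (deriv D.curvature 0 / 2) * s))
      =O[𝓝[≠] 0] fun s => s ^ 2 := by
    simpa only [mul_div_cancel₀ _ (two_ne_zero' ℝ)] using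
      D.isBigO_curvature_sub.mono nhdsWithin_le_nhds
  have hκ' : (fun s => deriv D.curvature s - 2 * (deriv D.curvature 0 / 2))
      =O[𝓝[≠] 0] fun s => s := by
    simpa only [mul_div_cancel₀ _ (two_ne_zero' ℝ)] using
      D.isBigO_deriv_curvature_sub.mono nhdsWithin_le_nhds
  have hplate := (isBigO_plateKernel hα₂ hα₃ D.hasPhaseJet_tangent D.hasPhaseJet_curve_div hκ
    hκ').mul ((hσ.continuous.continuousAt.isBigO_one ℝ).mono nhdsWithin_le_nhds)
  refine hplate.congr' ?_ (.of_forall fun _ => mul_one 1)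
  filter_upwards [self_mem_nhdsWithin] with s hs
  rw [re_kernel_plateCoeffs, offset_zero, mul_div_cancel₀ _ (Complex.ofReal_ne_zero.mpr hs)]

lemma tendsto_integral_re_kernel_plateCoeffs (hσ : D.IsCoeff σ)
    (hα₂ : α₂ * (3 - ν) = (ν - 1) * (7 + ν)) (hα₃ : α₃ * (1 + ν) = (1 - ν) * (3 + ν)) :
    Tendsto (fun h : ℝ => ∫ s in (-D.halfPeriod)..D.halfPeriod,
        (D.kernel 1 (D.plateCoeffs ν α₂ α₃ σ) h s).re) (𝓝[>] 0)
      (𝓝 (4 * ((1 - ν) * (1 + ν) + ν * α₂) * D.curvature 0 ^ 2 * σ 0 * π +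
        ∫ s in (-D.halfPeriod)..D.halfPeriod,
          (D.kernel 1 (D.plateCoeffs ν α₂ α₃ σ) 0 s).re)) ∧
    Tendsto (fun h : ℝ => ∫ s in (-D.halfPeriod)..D.halfPeriod,
        (D.kernel 1 (D.plateCoeffs ν α₂ α₃ σ) h s).re) (𝓝[<] 0)
      (𝓝 (-(4 * ((1 - ν) * (1 + ν) + ν * α₂) * D.curvature 0 ^ 2 * σ 0 * π) +
        ∫ s in (-D.halfPeriod)..D.halfPeriod,
          (D.kernel 1 (D.plateCoeffs ν α₂ α₃ σ) 0 s).re)) :=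
  D.tendsto_integral_re_kernel (isCoeff_of_mem_plateCoeffs hσ ν α₂ α₃)
    (residual_one_plateCoeffs_zero hσ hα₂ hα₃) (isBigO_re_kernel_plateCoeffs hσ hα₂ hα₃)

end TangentLoop

/-! ### From the boundary curve to the tangent frame -/

/-- Simple closed curves of length `L` in the plane, parametrized by arc length. -/
structure IsUnitSpeedLoop (L : ℝ) (γ : ℝ → ℝ × ℝ) : Prop where
  pos : 0 < L
  smoothPeriodic : SmoothPeriodic L γ
  injOn : Set.InjOn γ (Set.Ico 0 L)
  dot2_deriv (s : ℝ) : dot2 (deriv γ s) (deriv γ s) = 1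

namespace IsUnitSpeedLoop

variable {L : ℝ} {γ : ℝ → ℝ × ℝ} (hγ : IsUnitSpeedLoop L γ)

include hγ

lemma norm_toComplex_tang (s : ℝ) : ‖toComplex (tang γ s)‖ = 1 := by
  rw [← sq_eq_sq₀ (norm_nonneg _) zero_le_one, ← Complex.normSq_eq_norm_sq, one_pow,
    ← hγ.dot2_deriv s]
  simp [Complex.normSq_apply, dot2, tang]

lemma apply_add_ne {s : ℝ} (hs : s ∈ Set.Icc (-(L / 2)) (L / 2)) (hs0 : s ≠ 0) (t : ℝ) :
    γ (t + s) ≠ γ t := by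
  intro heq
  have hmod (a : ℝ) : γ (toIcoMod hγ.pos 0 a) = γ a := hγ.smoothPeriodic.periodic.sub_zsmul_eq _
  have hmem (a : ℝ) : toIcoMod hγ.pos 0 a ∈ Set.Ico 0 L := by
    simpa using toIcoMod_mem_Ico hγ.pos 0 a
  obtain ⟨n, hn⟩ := (toIcoMod_eq_toIcoMod hγ.pos).mp
    (hγ.injOn (hmem t) (hmem (t + s)) (by rw [hmod, hmod, heq]))
  rw [add_sub_cancel_left, zsmul_eq_mul] at hn
  have hlt : |(n : ℝ)| * L < 1 * L := by
    rw [← abs_of_pos hγ.pos, ← abs_mul, ← hn, abs_of_pos hγ.pos, one_mul]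
    exact (abs_le.mpr hs).trans_lt (half_lt_self hγ.pos)
  have hn1 : |(n : ℝ)| < 1 := lt_of_mul_lt_mul_right hlt hγ.pos.le
  have hn0 : n = 0 := Int.abs_lt_one_iff.mp (mod_cast hn1)
  exact hs0 (by simp [hn, hn0])

lemma smoothPeriodic_tangentialChart (t : ℝ) : SmoothPeriodic (2 * (L / 2)) fun s =>
    conj (toComplex (tang γ t)) * toComplex (γ (t + s) - γ t) where
  contDiff := contDiff_const.mul (toComplex.contDiff.comp
    ((hγ.smoothPeriodic.comp_const_add t).contDiff.sub contDiff_const))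
  periodic s := by
    simp only [mul_div_cancel₀ L (two_ne_zero' ℝ), ← add_assoc, hγ.smoothPeriodic.periodic (t + s)]

lemma hasDerivAt_tangentialChart (t s : ℝ) :
    HasDerivAt (fun s => conj (toComplex (tang γ t)) * toComplex (γ (t + s) - γ t))
      (conj (toComplex (tang γ t)) * toComplex (tang γ (t + s))) s :=
  (toComplex.hasFDerivAt.comp_hasDerivAt s
    (((hγ.smoothPeriodic.hasDerivAt (t + s)).comp_const_add t s).sub_const (γ t))).const_mul _

/-- The loop `γ` moved to the tangent frame at its point with parameter `t`. -/
def tangentLoop (t : ℝ) : TangentLoop where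
  curve s := conj (toComplex (tang γ t)) * toComplex (γ (t + s) - γ t)
  halfPeriod := L / 2
  halfPeriod_pos := half_pos hγ.pos
  smoothPeriodic := hγ.smoothPeriodic_tangentialChart t
  norm_deriv s := by
    rw [(hγ.hasDerivAt_tangentialChart t s).deriv, norm_mul, RCLike.norm_conj,
      hγ.norm_toComplex_tang, hγ.norm_toComplex_tang, one_mul]
  curve_zero := by simp
  deriv_zero := by
    rw [(hγ.hasDerivAt_tangentialChart t 0).deriv, add_zero, mul_comm,
      mul_conj_eq_one_of_norm_eq_one (hγ.norm_toComplex_tang t)]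
  curve_ne_zero s hs hs0 := by
    have hT : toComplex (tang γ t) ≠ 0 := norm_ne_zero_iff.mp (by simp [hγ.norm_toComplex_tang t])
    exact mul_ne_zero ((map_ne_zero _).mpr hT) (toComplex_sub_ne_zero (hγ.apply_add_ne hs hs0 t))

lemma tangent_tangentLoop (t s : ℝ) :
    (hγ.tangentLoop t).tangent s = conj (toComplex (tang γ t)) * toComplex (tang γ (t + s)) :=
  (hγ.hasDerivAt_tangentialChart t s).deriv

lemma curvature_tangentLoop (t s : ℝ) : (hγ.tangentLoop t).curvature s = curv γ (t + s) := by
  have hT := mul_conj_eq_one_of_norm_eq_one (hγ.norm_toComplex_tang t)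
  have hderiv : deriv (hγ.tangentLoop t).tangent s =
      conj (toComplex (tang γ t)) * toComplex (deriv (deriv γ) (t + s)) := by
    rw [funext (hγ.tangent_tangentLoop t)]
    exact ((toComplex.hasFDerivAt.comp_hasDerivAt s
      ((hγ.smoothPeriodic.deriv.hasDerivAt (t + s)).comp_const_add t s)).const_mul _).deriv
  have hmul : conj ((hγ.tangentLoop t).tangent s) * deriv (hγ.tangentLoop t).tangent s =
      conj (toComplex (tang γ (t + s))) * toComplex (deriv (deriv γ) (t + s)) := by
    rw [hderiv, tangent_tangentLoop, map_mul, Complex.conj_conj]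
    linear_combination
      conj (toComplex (tang γ (t + s))) * toComplex (deriv (deriv γ) (t + s)) * hT
  rw [TangentLoop.curvature, hmul]
  simp only [tang, Complex.mul_im, Complex.conj_re, Complex.equivRealProdCLM_symm_apply_re,
    Complex.equivRealProdCLM_symm_apply_im, Complex.conj_im, curv, dot2, nor]
  ring

lemma offset_tangentLoop (t h s : ℝ) : (hγ.tangentLoop t).offset h s =
    conj (toComplex (tang γ t)) * toComplex (γ t + h • nor γ t - γ (t + s)) := by
  have hT := mul_conj_eq_one_of_norm_eq_one (hγ.norm_toComplex_tang t)
  simp only [TangentLoop.offset, tangentLoop, map_sub, map_add, map_smul, toComplex_nor,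
    Complex.real_smul]
  linear_combination Complex.I * h * hT

lemma periodic_suppKer {σ : ℝ → ℝ} (hσ : Function.Periodic σ L) (ν α₁ α₂ α₃ t : ℝ) (x : ℝ × ℝ) :
    Function.Periodic (fun s => suppKer γ ν α₁ α₂ α₃ t x s * σ s) L := by
  have hper := hγ.smoothPeriodic.periodic
  have htan := hγ.smoothPeriodic.deriv.periodic
  have hcurv (s : ℝ) : curv γ (s + L) = curv γ s := by
    simp only [curv, nor, htan s, hγ.smoothPeriodic.deriv.deriv.periodic s]
  have hcurv' (s : ℝ) : deriv (curv γ) (s + L) = deriv (curv γ) s := by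
    rw [← deriv_comp_add_const, funext hcurv]
  intro s
  simp only [suppKer, tang, nor, hper s, htan s, hcurv, hcurv', hσ s]

variable {σ : ℝ → ℝ} {ν α₂ α₃ : ℝ}

lemma suppKer_mul_eq {t h s : ℝ} (hz : (hγ.tangentLoop t).offset h s ≠ 0) (ν α₂ α₃ : ℝ) :
    suppKer γ ν (2 - ν) α₂ α₃ t (γ t + h • nor γ t) (t + s) * σ (t + s) = (8 * π)⁻¹ *
      ((hγ.tangentLoop t).kernel 1
        ((hγ.tangentLoop t).plateCoeffs ν α₂ α₃ fun r => σ (t + r)) h s).re := by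
  have hne : γ t + h • nor γ t ≠ γ (t + s) := fun heq =>
    hz (by rw [offset_tangentLoop, heq, sub_self, map_zero, mul_zero])
  have hcurv' : deriv (hγ.tangentLoop t).curvature s = deriv (curv γ) (t + s) := by
    rw [funext (hγ.curvature_tangentLoop t), deriv_comp_const_add]
  rw [TangentLoop.re_kernel_plateCoeffs, tangent_tangentLoop, curvature_tangentLoop, hcurv',
    offset_tangentLoop, ← suppKer_eq_plateKernel hγ.norm_toComplex_tang ν α₂ α₃ t hne]
  field_simp

lemma integral_suppKer_mul_eq (hσ : Function.Periodic σ L) {t h : ℝ}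
    (hz : ∀ s ∈ Set.Icc (-(L / 2)) (L / 2), s ≠ 0 ∨ h ≠ 0 → (hγ.tangentLoop t).offset h s ≠ 0)
    (ν α₂ α₃ : ℝ) :
    ∫ s in 0..L, suppKer γ ν (2 - ν) α₂ α₃ t (γ t + h • nor γ t) s * σ s = (8 * π)⁻¹ *
      ∫ s in (-(L / 2))..(L / 2), ((hγ.tangentLoop t).kernel 1
        ((hγ.tangentLoop t).plateCoeffs ν α₂ α₃ fun r => σ (t + r)) h s).re := by
  have hshift := (hγ.periodic_suppKer hσ ν (2 - ν) α₂ α₃ t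
    (γ t + h • nor γ t)).intervalIntegral_add_eq 0 (t + -(L / 2))
  rw [zero_add, add_assoc, neg_add_eq_sub, sub_half] at hshift
  rw [hshift, ← intervalIntegral.integral_comp_add_left, ← intervalIntegral.integral_const_mul]
  refine intervalIntegral.integral_congr_ae ?_
  filter_upwards [volume.ae_ne (0 : ℝ)] with s hs hmem
  rw [Set.uIoc_of_le (by linarith [hγ.pos])] at hmem
  exact hγ.suppKer_mul_eq (hz s ⟨hmem.1.le, hmem.2⟩ (.inl hs)) ν α₂ α₃

lemma exists_eq_add (s t : ℝ) : ∃ r ∈ Set.Icc (-(L / 2)) (L / 2), γ s = γ (t + r) := by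
  obtain ⟨y, hy, heq⟩ := hγ.smoothPeriodic.periodic.exists_mem_Ico hγ.pos s (t - L / 2)
  exact ⟨y - t, ⟨by linarith [hy.1], by linarith [hy.2]⟩, by rw [heq, add_sub_cancel]⟩

lemma eventually_ne (t : ℝ) :
    ∀ᶠ h : ℝ in 𝓝 0, h ≠ 0 → ∀ s, γ t + h • nor γ t ≠ γ s := by
  filter_upwards [(hγ.tangentLoop t).eventually_offset_ne_zero] with h hz h0 s heq
  obtain ⟨r, hr, hs⟩ := hγ.exists_eq_add s t
  exact hz r hr (.inr h0) (by rw [offset_tangentLoop, heq, hs, sub_self, map_zero, mul_zero])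

lemma isCoeff_comp_const_add (hσ : SmoothPeriodic L σ) (t : ℝ) :
    (hγ.tangentLoop t).IsCoeff fun s => σ (t + s) := by
  simpa only [TangentLoop.IsCoeff, tangentLoop, mul_div_cancel₀ L (two_ne_zero' ℝ)] using
    hσ.comp_const_add t

lemma exists_abs_suppKer_mul_le (hσ : SmoothPeriodic L σ)
    (hα₂ : α₂ * (3 - ν) = (ν - 1) * (7 + ν)) (hα₃ : α₃ * (1 + ν) = (1 - ν) * (3 + ν)) (t : ℝ) :
    ∃ M, ∀ s, |suppKer γ ν (2 - ν) α₂ α₃ t (γ t) s * σ s| ≤ M := by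
  set D := hγ.tangentLoop t
  have hz : ∀ s ∈ Set.Icc (-(L / 2)) (L / 2), s ≠ 0 → D.offset 0 s ≠ 0 := fun s hs hs0 =>
    D.eventually_offset_ne_zero.self_of_nhds s hs (.inl hs0)
  obtain ⟨M, hM⟩ := exists_forall_norm_le_of_isBigO_one_punctured
    (fun s hs hs0 => Complex.continuous_re.continuousAt.comp (TangentLoop.continuousAt_kernel
      (TangentLoop.isCoeff_of_mem_plateCoeffs (hγ.isCoeff_comp_const_add hσ t) ν α₂ α₃) 1
      (hz s hs hs0)))
    (TangentLoop.isBigO_re_kernel_plateCoeffs (hγ.isCoeff_comp_const_add hσ t) hα₂ hα₃)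
  refine ⟨max |suppKer γ ν (2 - ν) α₂ α₃ t (γ t) t * σ t| ((8 * π)⁻¹ * M), fun s => ?_⟩
  obtain ⟨y, hy, heq⟩ := (hγ.periodic_suppKer hσ.periodic ν (2 - ν) α₂ α₃ t (γ t)).exists_mem_Ico
    hγ.pos s (t - L / 2)
  rw [heq]
  rcases eq_or_ne y t with rfl | hyt
  · exact le_max_left _ _
  refine le_max_of_le_right ?_
  have hmem : y - t ∈ Set.Icc (-(L / 2)) (L / 2) := ⟨by linarith [hy.1], by linarith [hy.2]⟩
  have hker := hγ.suppKer_mul_eq (hz _ hmem (sub_ne_zero.mpr hyt)) (σ := σ) ν α₂ α₃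
  rw [zero_smul, add_zero, add_sub_cancel] at hker
  rw [hker, abs_mul, abs_of_pos (by positivity : 0 < (8 * π)⁻¹)]
  exact mul_le_mul_of_nonneg_left (hM _ hmem) (by positivity)

lemma tendsto_integral_suppKer_mul (hσ : SmoothPeriodic L σ)
    (hα₂ : α₂ * (3 - ν) = (ν - 1) * (7 + ν)) (hα₃ : α₃ * (1 + ν) = (1 - ν) * (3 + ν)) (t : ℝ) :
    Tendsto (fun h : ℝ => ∫ s in 0..L,
        suppKer γ ν (2 - ν) α₂ α₃ t (γ t + h • nor γ t) s * σ s) (𝓝[>] 0)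
      (𝓝 (((1 - ν) * (1 + ν) + ν * α₂) / 2 * curv γ t ^ 2 * σ t +
        ∫ s in 0..L, suppKer γ ν (2 - ν) α₂ α₃ t (γ t) s * σ s)) ∧
    Tendsto (fun h : ℝ => ∫ s in 0..L,
        suppKer γ ν (2 - ν) α₂ α₃ t (γ t + h • nor γ t) s * σ s) (𝓝[<] 0)
      (𝓝 (-(((1 - ν) * (1 + ν) + ν * α₂) / 2 * curv γ t ^ 2 * σ t) +
        ∫ s in 0..L, suppKer γ ν (2 - ν) α₂ α₃ t (γ t) s * σ s)) := by
  have hint := (hγ.tangentLoop t).eventually_offset_ne_zero.mono fun h hz =>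
    (hγ.integral_suppKer_mul_eq hσ.periodic hz ν α₂ α₃).symm
  have hint₀ := hint.self_of_nhds
  rw [zero_smul, add_zero] at hint₀
  have hhalf : (hγ.tangentLoop t).halfPeriod = L / 2 := rfl
  have hcurv : (hγ.tangentLoop t).curvature 0 = curv γ t := by rw [curvature_tangentLoop, add_zero]
  obtain ⟨hpos, hneg⟩ := TangentLoop.tendsto_integral_re_kernel_plateCoeffs
    (hγ.isCoeff_comp_const_add hσ t) hα₂ hα₃
  simp only [hcurv, hhalf, add_zero] at hpos hneg
  rw [← hint₀]
  constructor
  · convert (hpos.const_mul (8 * π)⁻¹).congr' (nhdsWithin_le_nhds hint) using 2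
    field_simp
    ring
  · convert (hneg.const_mul (8 * π)⁻¹).congr' (nhdsWithin_le_nhds hint) using 2
    field_simp
    ring

end IsUnitSpeedLoop

theorem stmt18 (L : ℝ) (hL : 0 < L) (γ : ℝ → ℝ × ℝ)
    (hγ : ContDiff ℝ (⊤ : ℕ∞) γ)
    (hper : ∀ s, γ (s + L) = γ s)
    (hinj : Set.InjOn γ (Set.Ico 0 L))
    (harc : ∀ s, dot2 (deriv γ s) (deriv γ s) = 1)
    (ν : ℝ) (hν3 : ν ≠ 3) (hν1 : ν ≠ -1)
    (α₁ α₂ α₃ c₀ : ℝ) (hα₁ : α₁ = 2 - ν)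
    (hα₂ : α₂ = (ν - 1) * (7 + ν) / (3 - ν))
    (hα₃ : α₃ = (1 - ν) * (3 + ν) / (1 + ν))
    (hc₀ : c₀ = (ν - 1) * (ν + 3) * (2 * ν - 1) / (2 * (3 - ν)))
    (σ : ℝ → ℝ) (hσ : ContDiff ℝ (⊤ : ℕ∞) σ) (hσper : ∀ s, σ (s + L) = σ s)
    (t : ℝ) :
    ∃ h₀ > (0 : ℝ),
      (∀ h : ℝ, 0 < |h| → |h| < h₀ → ∀ s : ℝ, γ t + h • nor γ t ≠ γ s) ∧
      (∃ M : ℝ, ∀ s ∈ Set.Icc (0 : ℝ) L,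
        |suppKer γ ν α₁ α₂ α₃ t (γ t) s * σ s| ≤ M) ∧
      Tendsto
        (fun h : ℝ =>
          ∫ s in (0 : ℝ)..L, suppKer γ ν α₁ α₂ α₃ t (γ t + h • nor γ t) s * σ s)
        (𝓝[>] (0 : ℝ))
        (𝓝 (c₀ * (curv γ t) ^ 2 * σ t
          + ∫ s in (0 : ℝ)..L, suppKer γ ν α₁ α₂ α₃ t (γ t) s * σ s)) ∧
      Tendsto
        (fun h : ℝ =>
          ∫ s in (0 : ℝ)..L, suppKer γ ν α₁ α₂ α₃ t (γ t + h • nor γ t) s * σ s)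
        (𝓝[<] (0 : ℝ))
        (𝓝 (-(c₀ * (curv γ t) ^ 2 * σ t)
          + ∫ s in (0 : ℝ)..L, suppKer γ ν α₁ α₂ α₃ t (γ t) s * σ s)) := by
  have hloop : IsUnitSpeedLoop L γ := ⟨hL, ⟨hγ, hper⟩, hinj, harc⟩
  have hσL : SmoothPeriodic L σ := ⟨hσ, hσper⟩
  have h3 : 3 - ν ≠ 0 := sub_ne_zero.mpr hν3.symm
  have h1 : 1 + ν ≠ 0 := fun h => hν1 (by linarith)
  have hα₂' : α₂ * (3 - ν) = (ν - 1) * (7 + ν) := (eq_div_iff h3).mp hα₂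
  have hα₃' : α₃ * (1 + ν) = (1 - ν) * (3 + ν) := (eq_div_iff h1).mp hα₃
  have hc₀' : c₀ = ((1 - ν) * (1 + ν) + ν * α₂) / 2 := by
    rw [hc₀, hα₂]
    field_simp
    ring
  obtain ⟨h₀, hpos, hne⟩ := Metric.eventually_nhds_iff.mp (hloop.eventually_ne t)
  obtain ⟨M, hM⟩ := hloop.exists_abs_suppKer_mul_le hσL hα₂' hα₃' t
  rw [hα₁, hc₀']
  exact ⟨h₀, hpos, fun h hh hlt => hne (by simpa using hlt) (abs_pos.mp hh),
    ⟨M, fun s _ => hM s⟩, hloop.tendsto_integral_suppKer_mul hσL hα₂' hα₃' t⟩
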